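/- arXiv:2110.12549 — 2 statements merged into one kernel-verified Lean document; each statement's English description precedes it below -/
import Mathlib

section
/- For any real α > 1, if φ(n) = e^{α^n}, then the Hausdorff dimension of E(φ) equals 1/(1+α). -/
/-!
The sums `S_n ∼ φ n = exp (α ^ n)` grow superexponentially, so `S_n ∼ φ n` is equivalent to
`a_n a_{n+1} ∼ φ n`. Writing `log a_{k+1} = lam k + b k` with `lam k = α^(k+1) / (1 + α)`, for which
`lam k + lam (k+1) = α^(k+1)`, this says `b k + b (k+1) → 0`; in particular `b k = O(k)`.

Distances are measured through the tails `z k = [0; a_{k+1}, a_{k+2}, …]`: if `x = z 0` and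
`y = w 0` share their first `n` partial quotients, then `|x - y| = |z n - w n| ∏_{k<n} z k w k`
(`IsOrbit.abs_sub_eq_prod`), and `z k` is `1 / a_{k+1}` up to a bounded factor.

*Upper bound.* `E(φ)` is contained in the union over `B : ℕ` of the sets `nearSet α B` where
`|b k| ≤ B (k + 1)`. At level `n`, such a set is covered by at most `exp (A + O(n²))` cylinders of
diameter at most `exp (-(lam n + 2 A) + O(n²))`, where `A = ∑_{k<n} lam k`. Up to constants
`A = α^(n+1) / ((α - 1)(1 + α))` and `lam n + 2 A = α^(n+1) / (α - 1)`, whose ratio is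
`1 / (1 + α)` (`dimH_nearSet_le`).

*Lower bound.* Let the partial quotient at place `k` range over about `exp (lam k) / (k + 1)`
consecutive integers starting at `⌈exp (lam k)⌉`. All resulting points lie in `E(φ)`, and they are
parametrized by `t ∈ [0, 1)` through the mixed-radix digits of `t`. The inverse of this coding is
`r`-Hölder for every `r < 1 / (1 + α)` (`exists_holder_bound`) and has image `[0, 1)`, which forces
the dimension to be at least `r`.
-/


open MeasureTheory Filter Real Set

/-- The Gauss map `T(x) = 1/x - ⌊1/x⌋`, with `T(0) = 0`. -/
noncomputable def gaussMap (x : ℝ) : ℝ := if x = 0 then 0 else 1 / x - ⌊1 / x⌋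

/-- The `n`-th partial quotient `a_n(x) = ⌊1 / T^{n-1}(x)⌋` (for `n ≥ 1`). -/
noncomputable def pq (n : ℕ) (x : ℝ) : ℕ := ⌊1 / (gaussMap^[n - 1] x)⌋₊

/-- `S_n(x) = ∑_{i=1}^n a_i(x) a_{i+1}(x)`. -/
noncomputable def S (n : ℕ) (x : ℝ) : ℕ := ∑ i ∈ Finset.Icc 1 n, pq i x * pq (i + 1) x

/-- The level set `E(φ)` of points whose sums `S_n` grow like `φ(n)`. -/
def Ephi (φ : ℕ → ℝ) : Set ℝ :=
  {x : ℝ | x ∈ Set.Ioo (0:ℝ) 1 ∧ Irrational x ∧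
    Tendsto (fun n : ℕ => (S n x : ℝ) / φ n) atTop (nhds 1)}

/-! ### Continued fraction tails -/

/-- `z` lists the tails `z k = [0; a k, a (k+1), …]` of the continued fraction with digits `a`,
indexed from `0`: all tails lie in `(0, 1)` and `z k = 1 / (a k + z (k + 1))`. -/
def IsOrbit (a : ℕ → ℕ) (z : ℕ → ℝ) : Prop :=
  ∀ k, 0 < z k ∧ z k < 1 ∧ z k * (a k + z (k + 1)) = 1

lemma IsOrbit.mul_le_one {a : ℕ → ℕ} {z : ℕ → ℝ} (h : IsOrbit a z) (k : ℕ) :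
    z k * a k ≤ 1 := by
  have h1 := h k
  have h2 := h (k + 1)
  nlinarith [mul_pos h1.1 h2.1]

lemma IsOrbit.one_le_mul {a : ℕ → ℕ} {z : ℕ → ℝ} (h : IsOrbit a z) (k : ℕ) :
    1 ≤ z k * (a k + 1) := by
  have h1 := h k
  have h2 := h (k + 1)
  nlinarith [mul_pos h1.1 (sub_pos.2 h2.2.1)]

/-- One step of the continued fraction recursion: `1/(a+s) - 1/(b+t) = ((b+t) - (a+s)) · zw`. -/
lemma IsOrbit.abs_sub {a b : ℕ → ℕ} {z w : ℕ → ℝ} (hz : IsOrbit a z) (hw : IsOrbit b w) (k : ℕ) :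
    |z k - w k| = |((b k : ℝ) + w (k + 1)) - (a k + z (k + 1))| * (z k * w k) := by
  have h1 := hz k
  have h2 := hw k
  have e1 : ((b k : ℝ) + w (k + 1)) * (z k * w k) = z k * (w k * (b k + w (k + 1))) := by ring
  have e2 : ((a k : ℝ) + z (k + 1)) * (z k * w k) = w k * (z k * (a k + z (k + 1))) := by ring
  rw [← abs_of_pos (mul_pos h1.1 h2.1), ← abs_mul, sub_mul, e1, e2, h1.2.2, h2.2.2, mul_one, mul_one]

/-- Distance of two points whose first `n` partial quotients agree. This replaces the usual
estimates by continuants `q_n`. -/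
lemma IsOrbit.abs_sub_eq_prod {a b : ℕ → ℕ} {z w : ℕ → ℝ} (hz : IsOrbit a z) (hw : IsOrbit b w)
    (n : ℕ) (hab : ∀ k < n, a k = b k) :
    |z 0 - w 0| = |z n - w n| * ∏ k ∈ Finset.range n, (z k * w k) := by
  induction n with
  | zero => simp
  | succ n ih =>
    rw [ih fun k hk => hab k (by omega), hz.abs_sub hw n, hab n (by omega), Finset.prod_range_succ,
      add_sub_add_left_eq_sub, abs_sub_comm]
    ring

lemma gaussMap_spec {x : ℝ} (hx : x ∈ Ioo (0 : ℝ) 1) (hi : Irrational x) :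
    gaussMap x ∈ Ioo (0 : ℝ) 1 ∧ Irrational (gaussMap x) ∧ x * (⌊1 / x⌋₊ + gaussMap x) = 1 := by
  have hx0 : x ≠ 0 := hx.1.ne'
  have hpos : 0 ≤ 1 / x := by have := hx.1; positivity
  have hg : gaussMap x = 1 / x - ⌊1 / x⌋ := by simp [gaussMap, hx0]
  have hirr : Irrational (gaussMap x) := by
    rw [hg, one_div]
    exact (irrational_inv_iff.2 hi).sub_intCast _
  refine ⟨⟨?_, ?_⟩, hirr, ?_⟩
  · refine lt_of_le_of_ne ?_ hirr.ne_zero.symm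
    rw [hg]; exact sub_nonneg.2 (Int.floor_le _)
  · rw [hg]; linarith [Int.lt_floor_add_one (1 / x)]
  · rw [hg, natCast_floor_eq_intCast_floor hpos]
    field_simp
    ring

lemma isOrbit_of_irrational {x : ℝ} (hx : x ∈ Ioo (0 : ℝ) 1) (hi : Irrational x) :
    IsOrbit (fun k => pq (k + 1) x) (fun k => gaussMap^[k] x) := by
  have key : ∀ k, gaussMap^[k] x ∈ Ioo (0 : ℝ) 1 ∧ Irrational (gaussMap^[k] x) := by
    intro k
    induction k with
    | zero => exact ⟨hx, hi⟩
    | succ k ih =>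
      rw [Function.iterate_succ_apply']
      exact ⟨(gaussMap_spec ih.1 ih.2).1, (gaussMap_spec ih.1 ih.2).2.1⟩
  intro k
  refine ⟨(key k).1.1, (key k).1.2, ?_⟩
  have := (gaussMap_spec (key k).1 (key k).2).2.2
  rw [← Function.iterate_succ_apply' gaussMap] at this
  exact this

lemma IsOrbit.floor_eq {a : ℕ → ℕ} {z : ℕ → ℝ} (h : IsOrbit a z) (k : ℕ) :
    ⌊1 / z k⌋₊ = a k := by
  have h1 := h k
  have h2 := h (k + 1)
  have e : 1 / z k = a k + z (k + 1) := by
    rw [div_eq_iff h1.1.ne']; linarith [h1.2.2]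
  rw [e, Nat.floor_eq_iff (by linarith [h2.1, (Nat.cast_nonneg (a k) : (0 : ℝ) ≤ a k)])]
  constructor <;> linarith [h2.1, h2.2.1]

lemma IsOrbit.gaussMap_eq {a : ℕ → ℕ} {z : ℕ → ℝ} (h : IsOrbit a z) (k : ℕ) :
    gaussMap (z k) = z (k + 1) := by
  have h1 := h k
  have hf := h.floor_eq k
  have e : 1 / z k = a k + z (k + 1) := by
    rw [div_eq_iff h1.1.ne']; linarith [h1.2.2]
  have hpos : 0 ≤ 1 / z k := by have := h1.1; positivity
  rw [gaussMap, if_neg h1.1.ne', ← natCast_floor_eq_intCast_floor hpos, hf, e]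
  ring

lemma IsOrbit.iterate_eq {a : ℕ → ℕ} {z : ℕ → ℝ} (h : IsOrbit a z) (k : ℕ) :
    gaussMap^[k] (z 0) = z k := by
  induction k with
  | zero => rfl
  | succ k ih => rw [Function.iterate_succ_apply', ih, h.gaussMap_eq]

lemma IsOrbit.pq_eq {a : ℕ → ℕ} {z : ℕ → ℝ} (h : IsOrbit a z) (k : ℕ) :
    pq (k + 1) (z 0) = a k := by
  rw [pq, Nat.add_sub_cancel, h.iterate_eq, h.floor_eq]

/-- An infinite orbit never meets a rational: `z k = p / q` would give `z (k + 1)` the smaller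
denominator `p`. -/
lemma IsOrbit.irrational {a : ℕ → ℕ} {z : ℕ → ℝ} (h : IsOrbit a z) : Irrational (z 0) := by
  have key : ∀ q : ℕ, ∀ k, ∀ p : ℤ, z k * q = p → q ≠ 0 → False := by
    intro q
    induction q using Nat.strong_induction_on with
    | _ q ih =>
      intro k p hp hq
      have h1 := h k
      have hq' : (0 : ℝ) < q := by exact_mod_cast Nat.pos_of_ne_zero hq
      have hp0 : (0 : ℝ) < p := by rw [← hp]; exact mul_pos h1.1 hq'
      have hpq : (p : ℝ) < q := by rw [← hp]; nlinarith [h1.2.1]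
      have hp0' : 0 < p := by exact_mod_cast hp0
      lift p to ℕ using hp0'.le
      refine ih p (by exact_mod_cast hpq) (k + 1) (q - a k * p) ?_ (by omega)
      push_cast at hp ⊢
      rw [← hp]
      linear_combination (q : ℝ) * h1.2.2
  rintro ⟨r, hr⟩
  refine key r.den 0 r.num ?_ r.den_nz
  rw [← hr]
  exact_mod_cast Rat.mul_den_eq_num r

/-- Every digit sequence with digits at least `2` has an orbit. The finite systems
`z k = 1 / (a k + z (k + 1))`, `k < n`, are solved backwards, and compactness of `[0, 1]^ℕ`
gives a common solution. -/
lemma exists_isOrbit (a : ℕ → ℕ) (ha : ∀ k, 2 ≤ a k) :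
    ∃ z, IsOrbit a z ∧ ∀ k, z k ≤ 1 / 2 := by
  let C : ℕ → Set (ℕ → ℝ) := fun n =>
    {z | (∀ k, z k ∈ Icc (0 : ℝ) 1) ∧ ∀ k < n, z k * (a k + z (k + 1)) = 1}
  have hcl : ∀ n, IsClosed (C n) := by
    intro n
    have : C n = (⋂ k, {z : ℕ → ℝ | z k ∈ Icc (0 : ℝ) 1}) ∩
        ⋂ k, ⋂ (_ : k < n), {z : ℕ → ℝ | z k * (a k + z (k + 1)) = 1} := by
      ext z; simp [C]
    rw [this]
    refine (isClosed_iInter fun k => isClosed_Icc.preimage (continuous_apply k)).inter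
      (isClosed_iInter fun k => isClosed_iInter fun _ => isClosed_eq ?_ continuous_const)
    fun_prop
  have hne : ∀ n, (C n).Nonempty := by
    have : ∀ n, ∀ b : ℕ → ℕ, (∀ k, 2 ≤ b k) → ∃ z : ℕ → ℝ, (∀ k, z k ∈ Icc (0 : ℝ) 1) ∧
        ∀ k < n, z k * (b k + z (k + 1)) = 1 := by
      intro n
      induction n with
      | zero => exact fun b _ => ⟨fun _ => 0, by simp, by simp⟩
      | succ n ih =>
        intro b hb
        obtain ⟨z, hz, hz'⟩ := ih (fun k => b (k + 1)) fun k => hb _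
        have hb0 : (2 : ℝ) ≤ b 0 := by exact_mod_cast hb 0
        have hpos : 1 ≤ (b 0 : ℝ) + z 0 := by linarith [(hz 0).1]
        refine ⟨fun k => Nat.casesOn k (1 / (b 0 + z 0)) z, ?_, ?_⟩
        · rintro (_ | k)
          · exact ⟨one_div_nonneg.2 (zero_le_one.trans hpos), by
              simpa using inv_le_one_of_one_le₀ hpos⟩
          · exact hz k
        · rintro (_ | k) hk
          · exact one_div_mul_cancel (zero_lt_one.trans_le hpos).ne'
          · exact hz' k (by omega)
    exact fun n => this n a ha
  have hcomp : IsCompact (C 0) := by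
    refine (isCompact_univ_pi (X := fun _ : ℕ => ℝ) fun _ => isCompact_Icc
      (a := (0 : ℝ)) (b := 1)).of_isClosed_subset (hcl 0) ?_
    intro z hz k _
    exact hz.1 k
  obtain ⟨z, hz⟩ := IsCompact.nonempty_iInter_of_sequence_nonempty_isCompact_isClosed C
    (fun n z hz => ⟨hz.1, fun k hk => hz.2 k (by omega)⟩) hne hcomp hcl
  rw [mem_iInter] at hz
  have h01 : ∀ k, z k ∈ Icc (0 : ℝ) 1 := (hz 0).1
  have heq : ∀ k, z k * (a k + z (k + 1)) = 1 := fun k => (hz (k + 1)).2 k (by omega)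
  have hhalf : ∀ k, z k ≤ 1 / 2 := by
    intro k
    have h2 : (2 : ℝ) ≤ a k := by exact_mod_cast ha k
    nlinarith [heq k, (h01 k).1, (h01 (k + 1)).1, mul_nonneg (h01 k).1 (h01 (k + 1)).1]
  refine ⟨z, fun k => ⟨lt_of_le_of_ne (h01 k).1 ?_, by linarith [hhalf k], heq k⟩, hhalf⟩
  intro h0
  have := heq k
  rw [← h0] at this
  simp at this

/-! ### Reduction to products of consecutive partial quotients -/

/-- The typical size of `log a_{k+1}`: the solution `α^(k+1) / (1 + α)` of
`lam k + lam (k + 1) = α^(k+1)`. -/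
noncomputable def lam (α : ℝ) (k : ℕ) : ℝ := α ^ (k + 1) / (1 + α)

lemma lam_pos {α : ℝ} (hα : 1 < α) (k : ℕ) : 0 < lam α k := by
  have : 0 < α := by linarith
  unfold lam; positivity

lemma lam_add {α : ℝ} (hα : 1 < α) (k : ℕ) : lam α k + lam α (k + 1) = α ^ (k + 1) := by
  have : 1 + α ≠ 0 := by linarith
  unfold lam; field_simp; ring

lemma sum_lam {α : ℝ} (hα : 1 < α) (n : ℕ) : ∑ k ∈ Finset.range n, lam α k =
    α ^ (n + 1) / ((α - 1) * (1 + α)) - α / ((α - 1) * (1 + α)) := by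
  have h1 : 1 + α ≠ 0 := by linarith
  have h2 : α - 1 ≠ 0 := by linarith
  induction n with
  | zero => simp
  | succ n ih => rw [Finset.sum_range_succ, ih, lam]; field_simp; ring

lemma tendsto_poly_sub_pow {α : ℝ} (hα : 1 < α) {c : ℝ} (hc : 0 < c) (K K' : ℝ) :
    Tendsto (fun n : ℕ => K * ((n : ℝ) + 1) ^ 2 + K' - c * α ^ (n + 1)) atTop atBot := by
  have hp : Tendsto (fun n : ℕ => α ^ (n + 1)) atTop atTop :=
    (tendsto_pow_atTop_atTop_of_one_lt hα).comp (tendsto_add_atTop_nat 1)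
  have h2 : Tendsto (fun n : ℕ => ((n + 1 : ℕ) : ℝ) ^ 2 / α ^ (n + 1)) atTop (nhds 0) :=
    (tendsto_pow_const_div_const_pow_of_one_lt 2 hα).comp (tendsto_add_atTop_nat 1)
  have h0 : Tendsto (fun n : ℕ => K' / α ^ (n + 1)) atTop (nhds 0) :=
    tendsto_const_nhds.div_atTop hp
  have h3 : Tendsto (fun n : ℕ => K * (((n + 1 : ℕ) : ℝ) ^ 2 / α ^ (n + 1)) + K' / α ^ (n + 1) - c)
      atTop (nhds (-c)) := by
    simpa using ((h2.const_mul K).add h0).sub_const c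
  refine (hp.atTop_mul_neg (neg_lt_zero.2 hc) h3).congr fun n => ?_
  have : α ^ (n + 1) ≠ 0 := by have : 0 < α := by linarith
                               positivity
  push_cast
  field_simp

lemma S_succ (n : ℕ) (x : ℝ) : S (n + 1) x = S n x + pq (n + 1) x * pq (n + 2) x := by
  rw [S, S, Finset.sum_Icc_succ_top (by omega)]

lemma tendsto_exp_ratio {α : ℝ} (hα : 1 < α) :
    Tendsto (fun n : ℕ => Real.exp (α ^ n) / Real.exp (α ^ (n + 1))) atTop (nhds 0) := by
  have : Tendsto (fun n : ℕ => (1 - α) * α ^ n) atTop atBot :=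
    (tendsto_pow_atTop_atTop_of_one_lt hα).const_mul_atTop_of_neg (by linarith)
  refine (Real.tendsto_exp_atBot.comp this).congr fun n => ?_
  simp only [Function.comp]
  rw [← Real.exp_sub]; congr 1; ring

/-- As `φ n / φ (n + 1) → 0`, a sum `S_n ∼ φ n` is dominated by its last term. -/
lemma tendsto_mul_of_mem_Ephi {α : ℝ} (hα : 1 < α) {x : ℝ}
    (hx : x ∈ Ephi (fun n : ℕ => Real.exp (α ^ n))) :
    Tendsto (fun n : ℕ => ((pq (n + 1) x : ℝ) * pq (n + 2) x) / Real.exp (α ^ (n + 1)))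
      atTop (nhds 1) := by
  have h1 := hx.2.2
  have h2 := h1.comp (tendsto_add_atTop_nat 1)
  have h3 := h2.sub (h1.mul (tendsto_exp_ratio hα))
  rw [mul_zero, sub_zero] at h3
  refine h3.congr fun n => ?_
  simp only [Function.comp, S_succ]
  have e1 := Real.exp_ne_zero (α ^ n)
  have e2 := Real.exp_ne_zero (α ^ (n + 1))
  push_cast
  field_simp
  ring

lemma mem_Ephi_of_tendsto_mul {α : ℝ} (hα : 1 < α) {x : ℝ} (hx : x ∈ Ioo (0 : ℝ) 1)
    (hi : Irrational x)
    (h : Tendsto (fun n : ℕ => ((pq (n + 1) x : ℝ) * pq (n + 2) x) / Real.exp (α ^ (n + 1)))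
      atTop (nhds 1)) : x ∈ Ephi (fun n : ℕ => Real.exp (α ^ n)) := by
  refine ⟨hx, hi, ?_⟩
  set φ : ℕ → ℝ := fun n => Real.exp (α ^ n) with hφ
  have hφ0 : ∀ n, φ n ≠ 0 := fun n => Real.exp_ne_zero _
  have hpow : Tendsto (fun n : ℕ => α ^ n) atTop atTop := tendsto_pow_atTop_atTop_of_one_lt hα
  have hφt : Tendsto φ atTop atTop := Real.tendsto_exp_atTop.comp hpow
  set g : ℕ → ℝ := fun n => φ (n + 1) - φ n with hg
  have hgs : ∀ n, ∑ i ∈ Finset.range n, g i = φ n - φ 0 := fun n => Finset.sum_range_sub φ n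
  have hg0 : 0 ≤ g := fun n => sub_nonneg.2 <| Real.exp_le_exp.2 <|
    pow_le_pow_right₀ hα.le (Nat.le_succ n)
  have hr := tendsto_exp_ratio hα
  have hgφ : Tendsto (fun n => g n / φ (n + 1)) atTop (nhds 1) := by
    have := hr.const_sub 1
    rw [sub_zero] at this
    refine this.congr fun n => ?_
    change 1 - φ n / φ (n + 1) = (φ (n + 1) - φ n) / φ (n + 1)
    rw [sub_div, div_self (hφ0 _)]
  have hp : Tendsto (fun n : ℕ => ((pq (n + 1) x : ℝ) * pq (n + 2) x) / g n) atTop (nhds 1) := by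
    have := h.div hgφ one_ne_zero
    rw [div_one] at this
    refine this.congr fun n => ?_
    exact div_div_div_cancel_right₀ (hφ0 (n + 1)) _ _
  have hgpos : ∀ n, g n ≠ 0 := fun n => (sub_pos.2 <| Real.exp_lt_exp.2 <|
    pow_lt_pow_right₀ hα (Nat.lt_succ_self n)).ne'
  have ho : (fun n : ℕ => (pq (n + 1) x : ℝ) * pq (n + 2) x - g n) =o[atTop] g := by
    refine (Asymptotics.isLittleO_iff_tendsto' (Eventually.of_forall fun n h => absurd h (hgpos n))).2 ?_
    have := hp.sub_const 1
    rw [sub_self] at this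
    refine this.congr fun n => ?_
    rw [sub_div, div_self (hgpos n)]
  have hsum := ho.sum_range hg0 (by
    simp_rw [hgs]; exact tendsto_atTop_add_const_right _ _ hφt)
  simp_rw [Finset.sum_sub_distrib, hgs] at hsum
  have hS : ∀ n, ∑ i ∈ Finset.range n, (pq (i + 1) x : ℝ) * pq (i + 2) x = S n x := by
    intro n
    induction n with
    | zero => simp [S]
    | succ n ih => rw [Finset.sum_range_succ, ih, S_succ]; push_cast; ring
  simp_rw [hS] at hsum
  have hc : (fun _ : ℕ => φ 0) =o[atTop] φ := by
    refine Asymptotics.isLittleO_const_left.2 (Or.inr ?_)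
    exact tendsto_norm_atTop_atTop.comp hφt
  have hO : (fun n => φ n - φ 0) =O[atTop] φ := (Asymptotics.isBigO_refl φ _).sub hc.isBigO
  have hfin : (fun n => (S n x : ℝ) - φ n) =o[atTop] φ := by
    refine ((hsum.trans_isBigO hO).sub hc).congr_left fun n => ?_
    ring
  have := hfin.tendsto_div_nhds_zero.add_const 1
  rw [zero_add] at this
  refine this.congr fun n => ?_
  rw [sub_div, div_self (hφ0 n)]
  ring

lemma IsOrbit.digit_pos {a : ℕ → ℕ} {z : ℕ → ℝ} (h : IsOrbit a z) (k : ℕ) : 0 < a k := by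
  rcases Nat.eq_zero_or_pos (a k) with h0 | h0
  · have h1 := h k
    have h2 := h (k + 1)
    rw [h0] at h1
    push_cast at h1
    nlinarith [h1.1, h1.2.1, h1.2.2, h2.1, h2.2.1]
  · exact h0

/-- Points whose partial quotients have logarithms within `O(k)` of `lam α k`. -/
def nearSet (α B : ℝ) : Set ℝ :=
  {x | ∃ a z, IsOrbit a z ∧ z 0 = x ∧ ∀ k : ℕ, |Real.log (a k) - lam α k| ≤ B * (k + 1)}

/-- With `b k = log a_{k+1} - lam k`, membership in `E(φ)` says `b k + b (k + 1) → 0`; hence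
`|b k|` grows at most linearly. -/
lemma Ephi_subset_iUnion {α : ℝ} (hα : 1 < α) :
    Ephi (fun n : ℕ => Real.exp (α ^ n)) ⊆ ⋃ B : ℕ, nearSet α B := by
  intro x hx
  have horb := isOrbit_of_irrational hx.1 hx.2.1
  have ht := tendsto_mul_of_mem_Ephi hα hx
  have hpos : ∀ n, (0 : ℝ) < pq (n + 1) x := fun n => by exact_mod_cast horb.digit_pos n
  have hlog := (ht.log one_ne_zero).norm
  obtain ⟨C, hC⟩ := hlog.bddAbove_range
  set b : ℕ → ℝ := fun k => Real.log (pq (k + 1) x) - lam α k with hb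
  have hbb : ∀ k, |b k + b (k + 1)| ≤ C := by
    intro k
    have : |Real.log ((pq (k + 1) x : ℝ) * pq (k + 2) x / Real.exp (α ^ (k + 1)))| ≤ C := by
      simpa using hC (mem_range_self k)
    rw [Real.log_div (mul_pos (hpos k) (hpos (k + 1))).ne' (Real.exp_ne_zero _), Real.log_exp,
      Real.log_mul (hpos k).ne' (hpos (k + 1)).ne', ← lam_add hα] at this
    convert this using 2
    simp only [hb]; ring
  have hind : ∀ k : ℕ, |b k| ≤ |b 0| + C * k := by
    intro k
    induction k with
    | zero => simp
    | succ k ih =>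
      have h1 : |b (k + 1)| ≤ |b k + b (k + 1)| + |b k| := by
        simpa using abs_sub (b k + b (k + 1)) (b k)
      push_cast
      linarith [hbb k]
  have hC0 : 0 ≤ C := (abs_nonneg _).trans (hbb 0)
  obtain ⟨B, hB⟩ := exists_nat_ge (|b 0| + C)
  refine mem_iUnion.2 ⟨B, _, _, horb, rfl, fun k => (hind k).trans ?_⟩
  have : (0 : ℝ) ≤ k := Nat.cast_nonneg k
  nlinarith [abs_nonneg (b 0)]

/-! ### The upper bound -/

lemma sum_succ_le (n : ℕ) : ∑ k ∈ Finset.range n, ((k : ℝ) + 1) ≤ ((n : ℝ) + 1) ^ 2 := by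
  induction n with
  | zero => simp
  | succ n ih => rw [Finset.sum_range_succ]; push_cast; nlinarith [(Nat.cast_nonneg n : (0 : ℝ) ≤ n)]

lemma succ_le_sq (n : ℕ) : (n : ℝ) + 1 ≤ ((n : ℝ) + 1) ^ 2 := by
  nlinarith [(Nat.cast_nonneg n : (0 : ℝ) ≤ n)]

lemma lam_add_two_sum {α : ℝ} (hα : 1 < α) (n : ℕ) :
    lam α n + 2 * ∑ k ∈ Finset.range n, lam α k =
      α ^ (n + 1) / (α - 1) - 2 * (α / ((α - 1) * (1 + α))) := by
  have h1 : 1 + α ≠ 0 := by linarith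
  have h2 : α - 1 ≠ 0 := by linarith
  rw [sum_lam hα, lam]; field_simp; ring

lemma IsOrbit.le_exp {α B : ℝ} {a : ℕ → ℕ} {z : ℕ → ℝ} (h : IsOrbit a z)
    (hb : ∀ k : ℕ, |Real.log (a k) - lam α k| ≤ B * (k + 1)) (k : ℕ) :
    z k ≤ Real.exp (B * (k + 1) - lam α k) := by
  have hp : (0 : ℝ) < a k := by exact_mod_cast h.digit_pos k
  have h1 : z k ≤ (a k : ℝ)⁻¹ := by
    rw [← one_div, le_div_iff₀ hp]; exact h.mul_le_one k
  refine h1.trans ?_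
  rw [← Real.exp_log hp, ← Real.exp_neg]
  exact Real.exp_le_exp.2 (by linarith [(abs_le.1 (hb k)).1])

/-- The points of `nearSet α B` with prescribed first `n` partial quotients lie close together. -/
lemma cylinder_dist_le {α B : ℝ} (hB : 0 ≤ B) {a b : ℕ → ℕ} {z w : ℕ → ℝ}
    (hz : IsOrbit a z) (hw : IsOrbit b w)
    (ha : ∀ k : ℕ, |Real.log (a k) - lam α k| ≤ B * (k + 1))
    (hb : ∀ k : ℕ, |Real.log (b k) - lam α k| ≤ B * (k + 1))
    (n : ℕ) (hab : ∀ k < n, a k = b k) :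
    |z 0 - w 0| ≤ Real.exp (3 * B * (n + 1) ^ 2 -
      (lam α n + 2 * ∑ k ∈ Finset.range n, lam α k)) := by
  rw [hz.abs_sub_eq_prod hw n hab]
  have h1 : |z n - w n| ≤ Real.exp (B * (n + 1) - lam α n) := by
    have := hz.le_exp ha n
    have := hw.le_exp hb n
    rw [abs_le]
    constructor <;> linarith [(hz n).1, (hw n).1]
  have h2 : ∏ k ∈ Finset.range n, (z k * w k) ≤
      Real.exp (∑ k ∈ Finset.range n, (2 * B * ((k : ℝ) + 1) - 2 * lam α k)) := by
    rw [Real.exp_sum]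
    refine Finset.prod_le_prod (fun k _ => (mul_pos (hz k).1 (hw k).1).le) fun k _ => ?_
    refine (mul_le_mul (hz.le_exp ha k) (hw.le_exp hb k) (hw k).1.le (Real.exp_pos _).le).trans ?_
    rw [← Real.exp_add]
    exact Real.exp_le_exp.2 (by linarith)
  refine (mul_le_mul h1 h2 (Finset.prod_nonneg fun k _ => (mul_pos (hz k).1 (hw k).1).le)
    (Real.exp_pos _).le).trans ?_
  rw [← Real.exp_add, Finset.sum_sub_distrib, ← Finset.mul_sum, ← Finset.mul_sum]
  refine Real.exp_le_exp.2 ?_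
  have := mul_le_mul_of_nonneg_left (sum_succ_le n) hB
  have := mul_le_mul_of_nonneg_left (succ_le_sq n) hB
  linarith

/-- There are about `exp (∑_{k<n} lam k)` cylinders of order `n` meeting `nearSet α B`, each of
diameter about `exp (-(lam n + 2 ∑_{k<n} lam k))`; the two exponents have ratio `1 / (1 + α)`. -/
lemma dimH_nearSet_le {α : ℝ} (hα : 1 < α) {B : ℝ} (hB : 0 ≤ B) (d : NNReal)
    (hd : 1 / (1 + α) < d) : dimH (nearSet α B) ≤ d := by
  refine dimH_le_of_hausdorffMeasure_ne_top (ne_of_lt ?_)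
  let N : ℕ → ℕ := fun k => ⌊Real.exp (lam α k + B * (k + 1))⌋₊
  let R : ℕ → ℝ := fun n => Real.exp (3 * B * (n + 1) ^ 2 -
      (lam α n + 2 * ∑ k ∈ Finset.range n, lam α k))
  let t : ∀ n : ℕ, (∀ k : Fin n, Fin (N k + 1)) → Set ℝ := fun n i =>
    {x | ∃ a z, IsOrbit a z ∧ z 0 = x ∧ (∀ k : ℕ, |Real.log (a k) - lam α k| ≤ B * (k + 1)) ∧
      ∀ k : Fin n, a k = i k}
  have hdiam : ∀ n i, Metric.ediam (t n i) ≤ ENNReal.ofReal (R n) := by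
    intro n i
    refine Metric.ediam_le ?_
    rintro x ⟨a, z, hz, rfl, ha, hai⟩ y ⟨b, w, hw, rfl, hb, hbi⟩
    rw [edist_dist, Real.dist_eq]
    exact ENNReal.ofReal_le_ofReal (cylinder_dist_le hB hz hw ha hb n
      fun k hk => (hai ⟨k, hk⟩).trans (hbi ⟨k, hk⟩).symm)
  have hcov : ∀ n, nearSet α B ⊆ ⋃ i, t n i := by
    rintro n x ⟨a, z, hz, hzx, ha⟩
    refine mem_iUnion.2 ⟨fun k => ⟨a k, Nat.lt_succ_of_le (Nat.le_floor ?_)⟩,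
      a, z, hz, hzx, ha, fun _ => rfl⟩
    rw [← Real.log_le_iff_le_exp (by exact_mod_cast hz.digit_pos k)]
    linarith [(abs_le.1 (ha k)).2]
  have hcard : ∀ n, ((Fintype.card (∀ k : Fin n, Fin (N k + 1)) : ℕ) : ℝ) ≤
      Real.exp ((1 + B) * (n + 1) ^ 2 + ∑ k ∈ Finset.range n, lam α k) := by
    intro n
    rw [Fintype.card_pi]
    simp only [Fintype.card_fin]
    rw [Finset.prod_fin_eq_prod_range]
    push_cast
    have h1 : ∀ k : ℕ, ((N k : ℝ) + 1) ≤ Real.exp ((1 + B) * ((k : ℝ) + 1) + lam α k) := by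
      intro k
      have e0 : (0 : ℝ) ≤ B * (k + 1) := by positivity
      have e1 : (N k : ℝ) ≤ Real.exp (lam α k + B * (k + 1)) := Nat.floor_le (Real.exp_pos _).le
      have e2 : 1 ≤ Real.exp (lam α k + B * (k + 1)) :=
        Real.one_le_exp (by linarith [lam_pos hα k])
      have e3 : (2 : ℝ) ≤ Real.exp 1 := by linarith [Real.add_one_le_exp (1 : ℝ)]
      calc (N k : ℝ) + 1 ≤ Real.exp 1 * Real.exp (lam α k + B * (k + 1)) := by nlinarith
        _ = Real.exp (1 + (lam α k + B * (k + 1))) := by rw [Real.exp_add 1]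
        _ ≤ _ := Real.exp_le_exp.2 (by linarith [(Nat.cast_nonneg k : (0 : ℝ) ≤ k)])
    calc _ ≤ ∏ k ∈ Finset.range n, Real.exp ((1 + B) * ((k : ℝ) + 1) + lam α k) := by
          refine Finset.prod_le_prod (fun k _ => by positivity) fun k hk => ?_
          rw [dif_pos (Finset.mem_range.1 hk)]
          push_cast
          exact h1 k
      _ = Real.exp ((1 + B) * ∑ k ∈ Finset.range n, ((k : ℝ) + 1) +
            ∑ k ∈ Finset.range n, lam α k) := by
          rw [← Real.exp_sum, Finset.sum_add_distrib, Finset.mul_sum]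
      _ ≤ _ := by
          refine Real.exp_le_exp.2 ?_
          have := mul_le_mul_of_nonneg_left (sum_succ_le n) (by linarith : 0 ≤ 1 + B)
          linarith
  have h1 : 1 + α ≠ 0 := by linarith
  have h2 : 0 < α - 1 := by linarith
  set c1 : ℝ := α / ((α - 1) * (1 + α)) with hc1
  have hR : Tendsto (fun n => ENNReal.ofReal (R n)) atTop (nhds 0) := by
    rw [← ENNReal.ofReal_zero]
    refine ENNReal.tendsto_ofReal (Real.tendsto_exp_atBot.comp ?_)
    refine (tendsto_poly_sub_pow hα (inv_pos.2 h2) (3 * B) (2 * c1)).congr fun n => ?_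
    rw [lam_add_two_sum hα, hc1]; ring
  have hd' : 0 < ((d : ℝ) - 1 / (1 + α)) / (α - 1) := div_pos (by linarith) h2
  have hE : Tendsto (fun n : ℕ => ENNReal.ofReal (Real.exp
      ((1 + B + 3 * B * d) * ((n : ℝ) + 1) ^ 2 + (2 * c1 * d - c1) -
        ((d : ℝ) - 1 / (1 + α)) / (α - 1) * α ^ (n + 1)))) atTop (nhds 0) := by
    rw [← ENNReal.ofReal_zero]
    exact ENNReal.tendsto_ofReal (Real.tendsto_exp_atBot.comp (tendsto_poly_sub_pow hα hd' _ _))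
  have hsum : Tendsto (fun n => ∑ i, Metric.ediam (t n i) ^ (d : ℝ)) atTop (nhds 0) := by
    refine tendsto_of_tendsto_of_tendsto_of_le_of_le tendsto_const_nhds hE (fun _ => zero_le)
      fun n => ?_
    calc ∑ i, Metric.ediam (t n i) ^ (d : ℝ)
        ≤ ∑ _i : (∀ k : Fin n, Fin (N k + 1)), ENNReal.ofReal (R n) ^ (d : ℝ) :=
          Finset.sum_le_sum fun i _ => ENNReal.rpow_le_rpow (hdiam n i) d.2
      _ = ENNReal.ofReal ((Fintype.card (∀ k : Fin n, Fin (N k + 1)) : ℕ) * R n ^ (d : ℝ)) := by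
          rw [Finset.sum_const, nsmul_eq_mul, ENNReal.ofReal_mul (Nat.cast_nonneg _),
            ENNReal.ofReal_natCast, ENNReal.ofReal_rpow_of_pos (Real.exp_pos _)]
          rfl
      _ ≤ _ := by
          refine ENNReal.ofReal_le_ofReal ?_
          refine (mul_le_mul_of_nonneg_right (hcard n)
            (Real.rpow_nonneg (Real.exp_pos _).le _)).trans_eq ?_
          rw [← Real.exp_mul, ← Real.exp_add, lam_add_two_sum hα, sum_lam hα, ← hc1]
          congr 1
          have : α - 1 ≠ 0 := h2.ne'
          rw [hc1]
          field_simp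
          ring
  refine (Measure.hausdorffMeasure_le_liminf_sum (d : ℝ) _ _ hR t (Eventually.of_forall hdiam)
    (Eventually.of_forall hcov)).trans_lt ?_
  rw [hsum.liminf_eq]
  exact ENNReal.zero_lt_top

lemma dimH_Ephi_le {α : ℝ} (hα : 1 < α) :
    dimH (Ephi (fun n : ℕ => Real.exp (α ^ n))) ≤ ENNReal.ofReal (1 / (1 + α)) := by
  refine le_of_forall_gt fun d hd => ?_
  obtain ⟨e, he1, he2⟩ := ENNReal.lt_iff_exists_nnreal_btwn.1 hd
  refine lt_of_le_of_lt ?_ he2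
  have he : 1 / (1 + α) < (e : ℝ) := by
    rw [← ENNReal.ofReal_coe_nnreal] at he1
    exact (ENNReal.ofReal_lt_ofReal_iff_of_nonneg (by
      have : 0 < α := by linarith
      positivity)).1 he1
  refine (dimH_mono (Ephi_subset_iUnion hα)).trans ?_
  rw [dimH_iUnion]
  exact iSup_le fun B => dimH_nearSet_le hα (Nat.cast_nonneg B) e he

/-! ### The lower bound: a coding of points of `E(φ)` by mixed-radix digits -/

/-- Remainders of `t` in its mixed-radix expansion with bases `m 0, m 1, …`:
`t = ∑_{k<n} d k / (m 0 ⋯ m k) + cantorRem m t n / (m 0 ⋯ m (n-1))`. -/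
noncomputable def cantorRem (m : ℕ → ℕ) (t : ℝ) : ℕ → ℝ
  | 0 => t
  | k + 1 => Int.fract (m k * cantorRem m t k)

/-- Digits of `t` in its mixed-radix expansion with bases `m 0, m 1, …`. -/
noncomputable def cantorDigit (m : ℕ → ℕ) (t : ℝ) (k : ℕ) : ℕ := ⌊m k * cantorRem m t k⌋₊

lemma cantorRem_mem (m : ℕ → ℕ) {t : ℝ} (ht : t ∈ Ico (0 : ℝ) 1) (k : ℕ) :
    cantorRem m t k ∈ Ico (0 : ℝ) 1 := by
  cases k with
  | zero => exact ht
  | succ k => exact ⟨Int.fract_nonneg _, Int.fract_lt_one _⟩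

lemma cantor_step (m : ℕ → ℕ) {t : ℝ} (ht : t ∈ Ico (0 : ℝ) 1) (k : ℕ) :
    m k * cantorRem m t k = cantorDigit m t k + cantorRem m t (k + 1) := by
  have h0 : 0 ≤ m k * cantorRem m t k := mul_nonneg (Nat.cast_nonneg _) (cantorRem_mem m ht k).1
  rw [cantorDigit, cantorRem, natCast_floor_eq_intCast_floor h0, Int.floor_add_fract]

lemma cantorDigit_lt (m : ℕ → ℕ) (hm : ∀ k, 0 < m k) {t : ℝ} (ht : t ∈ Ico (0 : ℝ) 1) (k : ℕ) :
    cantorDigit m t k < m k := by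
  have h := cantorRem_mem m ht k
  have hmk : (0 : ℝ) < m k := by exact_mod_cast hm k
  rw [cantorDigit, Nat.floor_lt (mul_nonneg hmk.le h.1)]
  nlinarith [h.2]

lemma cantor_abs_sub (m : ℕ → ℕ) {t u : ℝ} (ht : t ∈ Ico (0 : ℝ) 1) (hu : u ∈ Ico (0 : ℝ) 1)
    (n : ℕ) (h : ∀ k < n, cantorDigit m t k = cantorDigit m u k) :
    |t - u| * ∏ k ∈ Finset.range n, (m k : ℝ) = |cantorRem m t n - cantorRem m u n| := by
  induction n with
  | zero => simp [cantorRem]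
  | succ n ih =>
    have e1 := cantor_step m ht n
    have e2 := cantor_step m hu n
    rw [h n (by omega)] at e1
    rw [Finset.prod_range_succ, ← mul_assoc, ih fun k hk => h k (by omega),
      ← abs_of_nonneg (Nat.cast_nonneg (m n) : (0 : ℝ) ≤ m n), ← abs_mul]
    congr 1
    linear_combination e1 - e2

/-- Smallest admissible partial quotient at place `k` in the Cantor-type subset of `E(φ)`. -/
noncomputable def lowDigit (α : ℝ) (k : ℕ) : ℕ := ⌈Real.exp (lam α k)⌉₊

/-- Number of admissible partial quotients at place `k`: a proportion of about `1 / (k + 1)` of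
`lowDigit α k`, so that all of them are asymptotic to `exp (lam α k)`. -/
noncomputable def numDigit (α : ℝ) (k : ℕ) : ℕ := ⌊(lowDigit α k : ℝ) / (k + 1)⌋₊ + 1

/-- The partial quotients assigned to `t ∈ [0, 1)`. -/
noncomputable def codeDigit (α t : ℝ) (k : ℕ) : ℕ :=
  lowDigit α k + cantorDigit (numDigit α) t k

lemma numDigit_pos (α : ℝ) (k : ℕ) : 0 < numDigit α k := Nat.succ_pos _

lemma two_le_codeDigit {α : ℝ} (hα : 1 < α) (t : ℝ) (k : ℕ) : 2 ≤ codeDigit α t k := by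
  have : 1 < lowDigit α k := by
    rw [lowDigit, Nat.lt_ceil]
    push_cast
    exact Real.one_lt_exp_iff.2 (lam_pos hα k)
  unfold codeDigit
  omega

lemma lowDigit_le (α : ℝ) (k : ℕ) : (lowDigit α k : ℝ) ≤ Real.exp (lam α k) + 1 :=
  (Nat.ceil_lt_add_one (Real.exp_pos _).le).le

lemma numDigit_le (α : ℝ) (k : ℕ) : (numDigit α k : ℝ) ≤ lowDigit α k / (k + 1) + 1 := by
  rw [numDigit]; push_cast
  have : (⌊(lowDigit α k : ℝ) / (k + 1)⌋₊ : ℝ) ≤ (lowDigit α k : ℝ) / (k + 1) :=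
    Nat.floor_le (by positivity)
  linarith

lemma exp_le_numDigit (α : ℝ) (k : ℕ) : Real.exp (lam α k - k) ≤ numDigit α k := by
  have h1 : (lowDigit α k : ℝ) / (k + 1) ≤ numDigit α k := by
    rw [numDigit]; push_cast; exact (Nat.lt_floor_add_one _).le
  refine le_trans ?_ h1
  rw [Real.exp_sub]
  exact div_le_div₀ (Nat.cast_nonneg _) (Nat.le_ceil _) (by positivity) (Real.add_one_le_exp _)

lemma codeDigit_le {α : ℝ} {t : ℝ} (ht : t ∈ Ico (0 : ℝ) 1) (k : ℕ) :
    (codeDigit α t k : ℝ) ≤ lowDigit α k + lowDigit α k / (k + 1) := by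
  have h := cantorDigit_lt (numDigit α) (numDigit_pos α) ht k
  have h1 := numDigit_le α k
  have h2 : (cantorDigit (numDigit α) t k : ℝ) + 1 ≤ numDigit α k := by exact_mod_cast h
  rw [codeDigit]; push_cast
  linarith

lemma codeDigit_add_one_le {α : ℝ} (hα : 1 < α) {t : ℝ} (ht : t ∈ Ico (0 : ℝ) 1) (k : ℕ) :
    (codeDigit α t k : ℝ) + 1 ≤ Real.exp (2 + lam α k) := by
  have h1 := codeDigit_le (α := α) ht k
  have h2 : (lowDigit α k : ℝ) / (k + 1) ≤ lowDigit α k :=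
    div_le_self (Nat.cast_nonneg _) (by linarith [(Nat.cast_nonneg k : (0 : ℝ) ≤ k)])
  have h3 := lowDigit_le α k
  have h4 : 1 ≤ Real.exp (lam α k) := Real.one_le_exp (lam_pos hα k).le
  have h5 : (5 : ℝ) ≤ Real.exp 2 := by
    have := Real.exp_one_gt_d9
    have e : Real.exp 2 = Real.exp 1 * Real.exp 1 := by rw [← Real.exp_add]; norm_num
    rw [e]; nlinarith
  rw [Real.exp_add]
  nlinarith

lemma tendsto_codeDigit {α : ℝ} (hα : 1 < α) {t : ℝ} (ht : t ∈ Ico (0 : ℝ) 1) :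
    Tendsto (fun k => (codeDigit α t k : ℝ) / Real.exp (lam α k)) atTop (nhds 1) := by
  have hpow : Tendsto (fun k : ℕ => α ^ (k + 1)) atTop atTop :=
    (tendsto_pow_atTop_atTop_of_one_lt hα).comp (tendsto_add_atTop_nat 1)
  have hl : Tendsto (fun k => (Real.exp (lam α k))⁻¹) atTop (nhds 0) :=
    tendsto_inv_atTop_zero.comp
      (Real.tendsto_exp_atTop.comp (hpow.atTop_div_const (by linarith)))
  have hk : Tendsto (fun k : ℕ => 1 / ((k : ℝ) + 1)) atTop (nhds 0) :=
    tendsto_one_div_add_atTop_nhds_zero_nat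
  have hu := (hl.const_add 1).mul (hk.const_add 1)
  simp only [add_zero, mul_one] at hu
  refine tendsto_of_tendsto_of_tendsto_of_le_of_le tendsto_const_nhds hu (fun k => ?_) fun k => ?_
  · change 1 ≤ _
    rw [one_le_div (Real.exp_pos _)]
    refine (Nat.le_ceil _).trans ?_
    rw [codeDigit]; push_cast
    exact le_add_of_nonneg_right (Nat.cast_nonneg _)
  · change _ ≤ (1 + (Real.exp (lam α k))⁻¹) * (1 + 1 / ((k : ℝ) + 1))
    rw [div_le_iff₀ (Real.exp_pos _)]
    have h0 : (0 : ℝ) ≤ 1 + 1 / ((k : ℝ) + 1) := by positivity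
    calc (codeDigit α t k : ℝ) ≤ lowDigit α k * (1 + 1 / ((k : ℝ) + 1)) := by
          rw [mul_add, mul_one, mul_one_div]; exact codeDigit_le ht k
      _ ≤ (Real.exp (lam α k) + 1) * (1 + 1 / ((k : ℝ) + 1)) :=
          mul_le_mul_of_nonneg_right (lowDigit_le α k) h0
      _ = _ := by
          have := Real.exp_ne_zero (lam α k)
          field_simp

lemma code_mem_Ephi {α : ℝ} (hα : 1 < α) {t : ℝ} (ht : t ∈ Ico (0 : ℝ) 1) {z : ℕ → ℝ}
    (hz : IsOrbit (codeDigit α t) z) : z 0 ∈ Ephi (fun n : ℕ => Real.exp (α ^ n)) := by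
  refine mem_Ephi_of_tendsto_mul hα ⟨(hz 0).1, (hz 0).2.1⟩ hz.irrational ?_
  have h := tendsto_codeDigit hα ht
  have h2 := h.mul (h.comp (tendsto_add_atTop_nat 1))
  rw [one_mul] at h2
  refine h2.congr fun n => ?_
  simp only [Function.comp]
  rw [hz.pq_eq n, hz.pq_eq (n + 1), ← lam_add hα, Real.exp_add, div_mul_div_comm]

lemma exp_le_prod_numDigit (α : ℝ) (n : ℕ) :
    Real.exp (∑ k ∈ Finset.range n, lam α k - ((n : ℝ) + 1) ^ 2) ≤
      ∏ k ∈ Finset.range n, (numDigit α k : ℝ) := by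
  calc _ ≤ Real.exp (∑ k ∈ Finset.range n, (lam α k - k)) := by
        rw [Finset.sum_sub_distrib]
        have h3 : ∑ k ∈ Finset.range n, (k : ℝ) ≤ ∑ k ∈ Finset.range n, ((k : ℝ) + 1) :=
          Finset.sum_le_sum fun k _ => by linarith
        exact Real.exp_le_exp.2 (by linarith [sum_succ_le n])
    _ ≤ _ := by
        rw [Real.exp_sum]
        exact Finset.prod_le_prod (fun k _ => (Real.exp_pos _).le) fun k _ => exp_le_numDigit α k

lemma eq_of_cantorDigit_eq {α : ℝ} (hα : 1 < α) {t u : ℝ} (ht : t ∈ Ico (0 : ℝ) 1)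
    (hu : u ∈ Ico (0 : ℝ) 1)
    (h : ∀ k, cantorDigit (numDigit α) t k = cantorDigit (numDigit α) u k) : t = u := by
  have h2 : 0 < α - 1 := by linarith
  have hc : 0 < 1 / ((α - 1) * (1 + α)) := by
    have : 0 < α := by linarith
    positivity
  have hlim := Real.tendsto_exp_atBot.comp
    (tendsto_poly_sub_pow hα hc 1 (α / ((α - 1) * (1 + α))))
  have hle : |t - u| ≤ 0 := by
    refine ge_of_tendsto' hlim fun n => ?_
    have e1 := cantor_abs_sub (numDigit α) ht hu n fun k _ => h k
    have e2 := cantorRem_mem (numDigit α) ht n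
    have e3 := cantorRem_mem (numDigit α) hu n
    have e4 : |cantorRem (numDigit α) t n - cantorRem (numDigit α) u n| ≤ 1 := by
      rw [abs_le]; constructor <;> linarith [e2.1, e2.2, e3.1, e3.2]
    have e5 := (mul_le_mul_of_nonneg_left (exp_le_prod_numDigit α n) (abs_nonneg (t - u))).trans
      (e1.trans_le e4)
    rw [← le_div_iff₀ (Real.exp_pos _), one_div, ← Real.exp_neg, sum_lam hα] at e5
    refine e5.trans_eq ?_
    simp only [Function.comp]
    congr 1
    ring
  exact sub_eq_zero.1 (abs_nonpos_iff.1 hle)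

/-- The inverse of the coding `t ↦ [0; codeDigit α t 0, codeDigit α t 1, …]` is `r`-Hölder for each
`0 < r < 1 / (1 + α)`. -/
lemma exists_holder_bound {α : ℝ} (hα : 1 < α) {r : ℝ} (hr0 : 0 < r) (hr : r < 1 / (1 + α)) :
    ∃ C : ℝ, 0 ≤ C ∧ ∀ t ∈ Ico (0 : ℝ) 1, ∀ u ∈ Ico (0 : ℝ) 1, ∀ z w : ℕ → ℝ,
      IsOrbit (codeDigit α t) z → IsOrbit (codeDigit α u) w →
      (∀ k, z k ≤ 1 / 2) → (∀ k, w k ≤ 1 / 2) → |t - u| ≤ C * |z 0 - w 0| ^ r := by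
  have h1 : 1 + α ≠ 0 := by linarith
  have h2 : 0 < α - 1 := by linarith
  have hr1 : r ≤ 1 := hr.le.trans (by rw [div_le_one (by linarith)]; linarith)
  set c1 : ℝ := α / ((α - 1) * (1 + α)) with hc1
  have hc : 0 < (1 / (1 + α) - r) / (α - 1) := div_pos (by linarith) h2
  obtain ⟨C, hC⟩ := (Real.tendsto_exp_atBot.comp (tendsto_poly_sub_pow hα hc
    (1 + 5 * r) (1 + c1 - 2 * r * c1))).bddAbove_range
  -- `C` absorbs the subexponential factors lost below at every level `n`.
  have hCn : ∀ n : ℕ, Real.exp (1 + ((n : ℝ) + 1) ^ 2 - ∑ k ∈ Finset.range n, lam α k) ≤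
      C * Real.exp (-5 * ((n : ℝ) + 1) ^ 2 -
        (lam α n + 2 * ∑ k ∈ Finset.range n, lam α k)) ^ r := by
    intro n
    have := hC (mem_range_self n)
    simp only [Function.comp] at this
    refine le_trans (le_of_eq ?_) (mul_le_mul_of_nonneg_right this
      (Real.rpow_nonneg (Real.exp_pos _).le _))
    rw [← Real.exp_mul, ← Real.exp_add, lam_add_two_sum hα, sum_lam hα, ← hc1]
    congr 1
    have : α - 1 ≠ 0 := h2.ne'
    rw [hc1]
    field_simp
    ring
  have hC0 : 0 ≤ C := (Real.exp_pos _).le.trans (hC (mem_range_self 0))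
  refine ⟨C, hC0, fun t ht u hu z w hz hw hz2 hw2 => ?_⟩
  set m := numDigit α with hm
  by_cases hall : ∀ k, cantorDigit m t k = cantorDigit m u k
  · rw [eq_of_cantorDigit_eq hα ht hu hall, sub_self, abs_zero]
    exact mul_nonneg hC0 (Real.rpow_nonneg (abs_nonneg _) _)
  · push Not at hall
    classical
    let n := Nat.find hall
    have hn : cantorDigit m t n ≠ cantorDigit m u n := Nat.find_spec hall
    have hlt : ∀ k < n, cantorDigit m t k = cantorDigit m u k :=
      fun k hk => not_not.1 (Nat.find_min hall hk)
    have hmn : (0 : ℝ) < m n := by exact_mod_cast numDigit_pos α n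
    set δ : ℝ := |(cantorDigit m t n : ℝ) - cantorDigit m u n| with hδ
    have hδ1 : 1 ≤ δ := by
      have : (1 : ℤ) ≤ |(cantorDigit m t n : ℤ) - cantorDigit m u n| :=
        Int.one_le_abs (sub_ne_zero.2 (by exact_mod_cast hn))
      rw [hδ]; exact_mod_cast this
    have hδm : δ ≤ m n := by
      have e1 : (cantorDigit m t n : ℝ) < m n := by
        exact_mod_cast cantorDigit_lt m (numDigit_pos α) ht n
      have e2 : (cantorDigit m u n : ℝ) < m n := by
        exact_mod_cast cantorDigit_lt m (numDigit_pos α) hu n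
      have e3 : (0 : ℝ) ≤ cantorDigit m t n := Nat.cast_nonneg _
      have e4 : (0 : ℝ) ≤ cantorDigit m u n := Nat.cast_nonneg _
      rw [hδ, abs_le]
      constructor <;> linarith
    set ρ : ℝ := δ / m n with hρ
    have hρ0 : 0 < ρ := div_pos (by linarith) hmn
    have hρ1 : ρ ≤ 1 := (div_le_one hmn).2 hδm
    -- `n` is the first differing digit; it alone controls `|t - u|` up to a factor `2`.
    have hprod := exp_le_prod_numDigit α n
    rw [← hm] at hprod
    have hrem : |cantorRem m t n - cantorRem m u n| ≤ 2 * ρ := by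
      have e1 := cantor_step m ht n
      have e2 := cantor_step m hu n
      have e3 := cantorRem_mem m ht (n + 1)
      have e4 := cantorRem_mem m hu (n + 1)
      have e5 : |cantorRem m t n - cantorRem m u n| * m n ≤ 2 * δ := by
        rw [← abs_of_pos hmn, ← abs_mul]
        have : (cantorRem m t n - cantorRem m u n) * m n =
            ((cantorDigit m t n : ℝ) - cantorDigit m u n) +
              (cantorRem m t (n + 1) - cantorRem m u (n + 1)) := by
          linear_combination e1 - e2
        rw [this]
        refine (abs_add_le _ _).trans ?_
        have : |cantorRem m t (n + 1) - cantorRem m u (n + 1)| ≤ 1 := by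
          rw [abs_le]; constructor <;> linarith [e3.1, e3.2, e4.1, e4.2]
        linarith
      rw [hρ, ← mul_div_assoc, le_div_iff₀ hmn]
      exact e5
    have htu : |t - u| ≤ ρ * Real.exp (1 + ((n : ℝ) + 1) ^ 2 - ∑ k ∈ Finset.range n, lam α k) := by
      have e1 := cantor_abs_sub m ht hu n hlt
      have e2 : |t - u| * Real.exp (∑ k ∈ Finset.range n, lam α k - ((n : ℝ) + 1) ^ 2) ≤ 2 * ρ :=
        (mul_le_mul_of_nonneg_left hprod (abs_nonneg _)).trans (e1.trans_le hrem)
      have e3 : (2 : ℝ) ≤ Real.exp 1 := by linarith [Real.add_one_le_exp (1 : ℝ)]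
      rw [← le_div_iff₀ (Real.exp_pos _), div_eq_mul_inv, ← Real.exp_neg] at e2
      refine e2.trans ?_
      have e4 : Real.exp (1 + ((n : ℝ) + 1) ^ 2 - ∑ k ∈ Finset.range n, lam α k) =
          Real.exp 1 * Real.exp (-(∑ k ∈ Finset.range n, lam α k - ((n : ℝ) + 1) ^ 2)) := by
        rw [← Real.exp_add]; congr 1; ring
      rw [e4]
      nlinarith [Real.exp_pos (-(∑ k ∈ Finset.range n, lam α k - ((n : ℝ) + 1) ^ 2)),
        mul_le_mul_of_nonneg_right e3 (mul_pos hρ0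
          (Real.exp_pos (-(∑ k ∈ Finset.range n, lam α k - ((n : ℝ) + 1) ^ 2)))).le]
    -- Lower bound for `|z 0 - w 0|`: the tails `z (n + 1)`, `w (n + 1)` differ by at most `1 / 2`,
    -- hence cannot cancel the difference `δ` of the integer parts.
    have hzw : ρ * Real.exp (-5 * ((n : ℝ) + 1) ^ 2 -
        (lam α n + 2 * ∑ k ∈ Finset.range n, lam α k)) ≤ |z 0 - w 0| := by
      have hcode : ∀ k < n, codeDigit α t k = codeDigit α u k := fun k hk => by
        rw [codeDigit, codeDigit, hlt k hk]
      have e1 : δ / 2 ≤ |((codeDigit α u n : ℝ) + w (n + 1)) - (codeDigit α t n + z (n + 1))| := by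
        have f1 : |w (n + 1) - z (n + 1)| ≤ 1 / 2 := by
          rw [abs_le]
          constructor <;> linarith [hz2 (n + 1), hw2 (n + 1), (hz (n + 1)).1, (hw (n + 1)).1]
        have f2 : (cantorDigit m t n : ℝ) - cantorDigit m u n =
            (w (n + 1) - z (n + 1)) -
              (((codeDigit α u n : ℝ) + w (n + 1)) - (codeDigit α t n + z (n + 1))) := by
          rw [codeDigit, codeDigit]; push_cast; ring
        have f3 := abs_sub (w (n + 1) - z (n + 1))
          (((codeDigit α u n : ℝ) + w (n + 1)) - (codeDigit α t n + z (n + 1)))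
        rw [← f2, ← hδ] at f3
        linarith
      have e2 : Real.exp (-(4 * ((n : ℝ) + 1)) -
          2 * (lam α n + ∑ k ∈ Finset.range n, lam α k)) ≤
          ∏ k ∈ Finset.range (n + 1), (z k * w k) := by
        have f1 : ∀ k, Real.exp (-(2 + lam α k)) ≤ z k := fun k => by
          rw [Real.exp_neg, inv_le_iff_one_le_mul₀ (Real.exp_pos _)]
          exact (hz.one_le_mul k).trans
            (mul_le_mul_of_nonneg_left (codeDigit_add_one_le hα ht k) (hz k).1.le)
        have f2 : ∀ k, Real.exp (-(2 + lam α k)) ≤ w k := fun k => by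
          rw [Real.exp_neg, inv_le_iff_one_le_mul₀ (Real.exp_pos _)]
          exact (hw.one_le_mul k).trans
            (mul_le_mul_of_nonneg_left (codeDigit_add_one_le hα hu k) (hw k).1.le)
        calc _ = ∏ k ∈ Finset.range (n + 1),
              (Real.exp (-(2 + lam α k)) * Real.exp (-(2 + lam α k))) := by
              simp_rw [← Real.exp_add]
              rw [← Real.exp_sum]
              congr 1
              have : ∀ k, -(2 + lam α k) + -(2 + lam α k) = -4 - 2 * lam α k := fun k => by ring
              simp_rw [this]
              rw [Finset.sum_sub_distrib, ← Finset.mul_sum, Finset.sum_range_succ (lam α)]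
              simp
              ring
          _ ≤ _ := Finset.prod_le_prod (fun k _ => by positivity) fun k _ =>
              mul_le_mul (f1 k) (f2 k) (Real.exp_pos _).le (hz k).1.le
      have e3 : |z 0 - w 0| =
          |((codeDigit α u n : ℝ) + w (n + 1)) - (codeDigit α t n + z (n + 1))| *
            ∏ k ∈ Finset.range (n + 1), (z k * w k) := by
        rw [hz.abs_sub_eq_prod hw n hcode, hz.abs_sub hw n, Finset.prod_range_succ]; ring
      have e4 : ρ * Real.exp (-1 - n + lam α n) ≤ δ / 2 := by
        have g1 := exp_le_numDigit α n
        have g2 : δ = ρ * m n := by rw [hρ, div_mul_cancel₀ _ hmn.ne']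
        have g3 : Real.exp (-1) ≤ 1 / 2 := by
          rw [Real.exp_neg, ← one_div]
          exact one_div_le_one_div_of_le two_pos (by linarith [Real.add_one_le_exp (1 : ℝ)])
        have g4 : Real.exp (-1 - n + lam α n) = Real.exp (-1) * Real.exp (lam α n - n) := by
          rw [← Real.exp_add]; congr 1; ring
        rw [g4, g2, mul_div_assoc]
        refine mul_le_mul_of_nonneg_left ?_ hρ0.le
        refine (mul_le_mul g3 g1 (Real.exp_pos _).le (by norm_num)).trans_eq ?_
        ring
      rw [e3]
      refine le_trans ?_ (mul_le_mul (e4.trans e1) e2 (Real.exp_pos _).le (abs_nonneg _))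
      rw [mul_assoc, ← Real.exp_add]
      refine mul_le_mul_of_nonneg_left (Real.exp_le_exp.2 ?_) hρ0.le
      linarith [succ_le_sq n]
    calc |t - u| ≤ ρ * Real.exp (1 + ((n : ℝ) + 1) ^ 2 - ∑ k ∈ Finset.range n, lam α k) := htu
      _ ≤ ρ ^ r * (C * Real.exp (-5 * ((n : ℝ) + 1) ^ 2 -
          (lam α n + 2 * ∑ k ∈ Finset.range n, lam α k)) ^ r) := by
          refine mul_le_mul ?_ (hCn n) (Real.exp_pos _).le (Real.rpow_nonneg hρ0.le _)
          simpa using Real.rpow_le_rpow_of_exponent_ge hρ0 hρ1 hr1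
      _ = C * (ρ * Real.exp (-5 * ((n : ℝ) + 1) ^ 2 -
          (lam α n + 2 * ∑ k ∈ Finset.range n, lam α k))) ^ r := by
          rw [Real.mul_rpow hρ0.le (Real.exp_pos _).le]; ring
      _ ≤ _ := mul_le_mul_of_nonneg_left (Real.rpow_le_rpow
          (mul_pos hρ0 (Real.exp_pos _)).le hzw hr0.le) hC0

lemma le_dimH_Ephi {α : ℝ} (hα : 1 < α) (r : NNReal) (hr0 : 0 < r)
    (hr : (r : ℝ) < 1 / (1 + α)) : (r : ENNReal) ≤ dimH (Ephi (fun n : ℕ => Real.exp (α ^ n))) := by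
  obtain ⟨C, hC0, hC⟩ := exists_holder_bound hα (by exact_mod_cast hr0) hr
  lift C to NNReal using hC0
  choose g hg hg2 using fun t : ℝ => exists_isOrbit (codeDigit α t) (two_le_codeDigit hα t)
  let G : ℝ → ℝ := fun t => g t 0
  have hGC : ∀ t ∈ Ico (0 : ℝ) 1, ∀ u ∈ Ico (0 : ℝ) 1, |t - u| ≤ C * |G t - G u| ^ (r : ℝ) :=
    fun t ht u hu => hC t ht u hu _ _ (hg t) (hg u) (hg2 t) (hg2 u)
  have hinj : InjOn G (Ico (0 : ℝ) 1) := by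
    intro t ht u hu h
    have := hGC t ht u hu
    rw [h, sub_self, abs_zero, Real.zero_rpow (by exact_mod_cast hr0.ne'), mul_zero] at this
    exact sub_eq_zero.1 (abs_nonpos_iff.1 this)
  let f := Function.invFunOn G (Ico (0 : ℝ) 1)
  have hf : HolderOnWith C r f (G '' Ico (0 : ℝ) 1) := by
    rintro _ ⟨t, ht, rfl⟩ _ ⟨u, hu, rfl⟩
    have ft : f (G t) = t := hinj.leftInvOn_invFunOn ht
    have fu : f (G u) = u := hinj.leftInvOn_invFunOn hu
    rw [ft, fu, edist_dist, edist_dist, Real.dist_eq, Real.dist_eq,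
      ENNReal.ofReal_rpow_of_nonneg (abs_nonneg _) r.coe_nonneg, ← ENNReal.ofReal_coe_nnreal (p := C),
      ← ENNReal.ofReal_mul C.coe_nonneg]
    exact ENNReal.ofReal_le_ofReal (hGC t ht u hu)
  have him : f '' (G '' Ico (0 : ℝ) 1) = Ico (0 : ℝ) 1 := hinj.leftInvOn_invFunOn.image_image
  have h1 : dimH (Ico (0 : ℝ) 1) = 1 := by
    rw [Real.dimH_of_nonempty_interior (by simp [interior_Ico])]
    simp
  have h2 := hf.dimH_image_le hr0
  rw [him, h1] at h2
  have h3 : dimH (G '' Ico (0 : ℝ) 1) ≤ dimH (Ephi (fun n : ℕ => Real.exp (α ^ n))) := by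
    refine dimH_mono ?_
    rintro _ ⟨t, ht, rfl⟩
    exact code_mem_Ephi hα ht (hg t)
  refine le_trans ?_ h3
  have hr' : (r : ENNReal) ≠ 0 := by exact_mod_cast hr0.ne'
  rw [ENNReal.le_div_iff_mul_le (Or.inl hr') (Or.inl ENNReal.coe_ne_top), one_mul] at h2
  exact h2

theorem dimH_Ephi_superexponential (α : ℝ) (hα : 1 < α) :
    dimH (Ephi (fun n : ℕ => Real.exp (α ^ n))) = ENNReal.ofReal (1 / (1 + α)) := by
  refine le_antisymm (dimH_Ephi_le hα) (le_of_forall_lt fun d hd => ?_)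
  have hpos : 0 < ENNReal.ofReal (1 / (1 + α)) := ENNReal.ofReal_pos.2 (by
    have : 0 < α := by linarith
    positivity)
  obtain ⟨e, he1, he2⟩ := ENNReal.lt_iff_exists_nnreal_btwn.1 hd
  refine he1.trans_le (le_dimH_Ephi hα e ?_ ?_)
  · exact_mod_cast (zero_le).trans_lt he1
  · rw [← ENNReal.ofReal_coe_nnreal] at he2
    exact (ENNReal.ofReal_lt_ofReal_iff_of_nonneg e.2).1 he2
end

section
/- Let c > 3/2 and g(n) = n (log n)^c. Then for Lebesgue almost every x ∈ (0,1), there exists a positive integer n_0(x) such that for all n ≥ n_0(x), the number of indices 1 ≤ i ≤ n with a_i(x)·a_{i+1}(x) > g(n) is at most 1. -/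
/-!
The argument is a Borel–Cantelli estimate along dyadic blocks. If `2 ^ k ≤ n < 2 ^ (k + 1)` then
`n (log n) ^ c ≥ G := 2 ^ k (log 2 ^ k) ^ c`, so it suffices that for almost every `x` and all large
`k` at most one index below `N = 2 ^ (k + 1)` has product exceeding `G` (the set `bad N G` contains
the exceptions).

Two facts bound the measure of `bad N G`.

* Quasi-independence with constant `4` (`QI.real`): an event `A` depending on the first `m` digits
  satisfies `λ(A ∩ T⁻ᵐ B) ≤ 4 λ(A) λ(B)`. It is proved for the whole family of measures
  `nu s t = dx / (s + t x) ^ 2` on `(0, 1)` with `0 ≤ t ≤ s`, `0 < s`. This family is stable under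
  restricting to a digit cylinder `{a₁ = a}` and pushing forward by the Gauss map: the pair `(s, t)`
  becomes `(s a + t, s)` (`nu_branch`). Each density varies by a factor of at most `4` on `(0, 1)`
  (`nu_le`), and summing over the digits gives an induction on `m` (`QI.step`).
* One and two consecutive large products: `λ(a₁ a₂ > G) ≤ (5 + 4 log G) / G` (`bigProd_le`) and
  `λ(a₁ a₂ > G, a₂ a₃ > G) ≤ 20 / G` (`bigProd_inter_le`).

Adjacent indices thus contribute `O(N / G) = O(k ^ (-c))` and non-adjacent ones
`O((N log G / G) ^ 2) = O(k ^ (2 - 2 c))`. The latter is summable exactly when `c > 3 / 2`.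
-/

open MeasureTheory Filter Real Set

/-! ### The Gauss map and its inverse branches -/

/-- The first partial quotient `⌊1 / x⌋` of `x`, so that `a_{i+1}(x) = digit (T^i x)`. -/
noncomputable def digit (x : ℝ) : ℕ := ⌊1 / x⌋₊

/-- Lebesgue measure on the open unit interval, as a measure on `ℝ`. -/
noncomputable abbrev leb01 : Measure ℝ := volume.restrict (Ioo (0 : ℝ) 1)

/-- The measure `dx / (s + t x) ^ 2` on `(0, 1)`. The images, under iterates of the Gauss map,
of Lebesgue measure restricted to digit cylinders are of this form with `0 ≤ t ≤ s` and `0 < s`. -/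
noncomputable def nu (s t : ℝ) : Measure ℝ :=
  leb01.withDensity (fun x => ENNReal.ofReal (1 / (s + t * x) ^ 2))

lemma measurable_digit : Measurable digit :=
  Nat.measurable_floor.comp (measurable_const.div measurable_id)

lemma measurable_gaussMap : Measurable gaussMap := by
  unfold gaussMap
  refine Measurable.ite (measurableSet_singleton 0) measurable_const ?_
  have h : Measurable fun x : ℝ => 1 / x := measurable_const.div measurable_id
  exact h.sub ((measurable_from_top (f := fun n : ℤ => (n : ℝ))).comp (Int.measurable_floor.comp h))

lemma pq_succ (i : ℕ) (x : ℝ) : pq (i + 1) x = digit (gaussMap^[i] x) := by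
  simp [pq, digit]

lemma nu_apply (s t : ℝ) {B : Set ℝ} (hB : MeasurableSet B) :
    nu s t B = ∫⁻ x in B ∩ Ioo 0 1, ENNReal.ofReal (1 / (s + t * x) ^ 2) := by
  rw [nu, withDensity_apply _ hB, Measure.restrict_restrict hB]

lemma nu_one_zero : nu 1 0 = leb01 := by
  simp [nu]

lemma nu_digit_zero (s t : ℝ) (B : Set ℝ) : nu s t ({x | digit x = 0} ∩ B) = 0 := by
  refine withDensity_absolutelyContinuous _ _ ?_
  refine measure_mono_null inter_subset_left ?_
  rw [Measure.restrict_apply' measurableSet_Ioo]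
  convert measure_empty (μ := (volume : Measure ℝ))
  ext x
  simp only [digit, mem_inter_iff, mem_ofPred_eq, mem_Ioo, mem_empty_iff_false, iff_false]
  rintro ⟨h, h0, h1⟩
  rw [Nat.floor_eq_zero, div_lt_one h0] at h
  linarith

/-- `y ↦ 1 / (a + y)` is the inverse branch of the Gauss map on the cylinder `{a₁ = a}`. -/
lemma digit_branch {a : ℕ} {y : ℝ} (ha : 1 ≤ a) (hy : y ∈ Ioo (0 : ℝ) 1) :
    digit (1 / (a + y)) = a ∧ gaussMap (1 / (a + y)) = y ∧ 1 / (a + y) ∈ Ioo (0 : ℝ) 1 := by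
  have ha' : (1 : ℝ) ≤ a := by exact_mod_cast ha
  obtain ⟨h0, h1⟩ := hy
  have hp : 0 < (a : ℝ) + y := by linarith
  refine ⟨?_, ?_, by positivity, ?_⟩
  · rw [digit, one_div_one_div, Nat.floor_eq_iff hp.le]
    constructor <;> linarith
  · have : ⌊(a : ℝ) + y⌋ = a := by
      rw [Int.floor_eq_iff]
      constructor <;> push_cast <;> linarith
    rw [gaussMap, if_neg (by positivity), one_div_one_div, this]
    push_cast; ring
  · rw [div_lt_one hp]; linarith

/-- The point `1 / a` has first digit `a` but is the image of `y = 0`, which is not in `(0, 1)`;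
it has to be removed. -/
lemma branch_image {a : ℕ} (ha : 1 ≤ a) (B : Set ℝ) :
    (({x | digit x = a} ∩ gaussMap ⁻¹' B) ∩ Ioo 0 1) \ {1 / (a : ℝ)} =
      (fun y : ℝ => 1 / (a + y)) '' (B ∩ Ioo 0 1) := by
  ext x
  constructor
  · rintro ⟨⟨⟨hd, hB⟩, h0, h1⟩, hne⟩
    simp only [mem_ofPred_eq, mem_preimage] at hd hB
    have hx : 0 < 1 / x := by positivity
    rw [digit, Nat.floor_eq_iff hx.le] at hd
    have hfl : ⌊1 / x⌋ = a := by
      rw [Int.floor_eq_iff]; exact_mod_cast hd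
    have hT : gaussMap x = 1 / x - a := by
      rw [gaussMap, if_neg h0.ne', hfl]; push_cast; rfl
    rw [hT] at hB
    refine ⟨1 / x - a, ⟨hB, ?_, by linarith [hd.2]⟩, by simp⟩
    rcases hd.1.lt_or_eq with h | h
    · linarith
    · exact absurd (by rw [mem_singleton_iff, h, one_div_one_div]) hne
  · rintro ⟨y, ⟨hyB, hy⟩, rfl⟩
    obtain ⟨h1, h2, h3⟩ := digit_branch ha hy
    refine ⟨⟨⟨h1, ?_⟩, h3⟩, ?_⟩
    · change gaussMap (1 / (a + y)) ∈ B
      rwa [h2]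
    · have ha' : (1 : ℝ) ≤ a := by exact_mod_cast ha
      simp only [mem_singleton_iff]
      intro h
      have := one_div_lt_one_div_of_lt (by linarith : (0 : ℝ) < a)
        (by linarith [hy.1] : (a : ℝ) < a + y)
      linarith

/-- Pushing the restriction of `nu s t` to `{a₁ = a}` forward by the Gauss map gives another member
of the family, by the change of variables `x = 1 / (a + y)`. -/
lemma nu_branch {a : ℕ} (ha : 1 ≤ a) {s t : ℝ} (hs : 0 < s) (ht : 0 ≤ t) {B : Set ℝ}
    (hB : MeasurableSet B) :
    nu s t ({x | digit x = a} ∩ gaussMap ⁻¹' B) = nu (s * a + t) s B := by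
  have ha' : (1 : ℝ) ≤ a := by exact_mod_cast ha
  have hm : MeasurableSet ({x | digit x = a} ∩ gaussMap ⁻¹' B) :=
    (measurable_digit (measurableSet_singleton a)).inter (measurable_gaussMap hB)
  rw [nu_apply _ _ hm, nu_apply _ _ hB,
    ← setLIntegral_congr (sdiff_null_ae_eq_self (measure_singleton (1 / (a : ℝ)))),
    branch_image ha,
    lintegral_image_eq_lintegral_abs_deriv_mul (f' := fun y => -1 / (a + y) ^ 2)
      (hB.inter measurableSet_Ioo)]
  · refine setLIntegral_congr_fun (hB.inter measurableSet_Ioo) ?_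
    rintro y ⟨-, hy0, hy1⟩
    have hp : 0 < (a : ℝ) + y := by linarith
    simp only
    rw [← ENNReal.ofReal_mul (abs_nonneg _), abs_div, abs_neg, abs_one,
      abs_of_pos (by positivity)]
    congr 1
    have : 0 < s * a + t + s * y := by positivity
    have : 0 < s * (a + y) + t := by positivity
    field_simp
    ring
  · rintro y ⟨-, hy0, hy1⟩
    have hp : 0 < (a : ℝ) + y := by linarith
    have := ((hasDerivAt_id y).const_add (a : ℝ)).fun_inv hp.ne'
    simpa [one_div] using this.hasDerivWithinAt
  · intro y _ z _ h
    simp only [one_div, inv_inj] at h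
    linarith

/-- The density of `nu s t` lies between `1 / (2 s) ^ 2` and `1 / s ^ 2`. -/
lemma nu_le {s t : ℝ} (hs : 0 < s) (ht : 0 ≤ t) (hts : t ≤ s) {B : Set ℝ} (hB : MeasurableSet B) :
    nu s t B ≤ 4 * leb01 B * nu s t univ := by
  have h1 : nu s t B ≤ ENNReal.ofReal (1 / s ^ 2) * leb01 B := by
    rw [nu_apply _ _ hB, Measure.restrict_apply hB, ← setLIntegral_const]
    refine setLIntegral_mono' (hB.inter measurableSet_Ioo) ?_
    rintro x ⟨-, h0, h1⟩
    gcongr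
    nlinarith
  have h2 : ENNReal.ofReal (1 / (2 * s) ^ 2) ≤ nu s t univ := by
    have : ENNReal.ofReal (1 / (2 * s) ^ 2) =
        ∫⁻ x in univ ∩ Ioo (0 : ℝ) 1, ENNReal.ofReal (1 / (2 * s) ^ 2) := by simp
    rw [nu_apply _ _ MeasurableSet.univ, this]
    refine setLIntegral_mono' (MeasurableSet.univ.inter measurableSet_Ioo) ?_
    rintro x ⟨-, h0, h1⟩
    have : 0 < s + t * x := by positivity
    gcongr
    nlinarith
  have h3 : ENNReal.ofReal (1 / s ^ 2) = 4 * ENNReal.ofReal (1 / (2 * s) ^ 2) := by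
    rw [show (4 : ENNReal) = ENNReal.ofReal 4 by simp, ← ENNReal.ofReal_mul (by norm_num)]
    congr 1; field_simp; norm_num
  calc nu s t B ≤ ENNReal.ofReal (1 / s ^ 2) * leb01 B := h1
    _ = 4 * leb01 B * ENNReal.ofReal (1 / (2 * s) ^ 2) := by rw [h3]; ring
    _ ≤ _ := by gcongr

/-! ### Quasi-independence -/

/-- `A` is quasi-independent, with constant `4`, of the digits after the `m`-th one, uniformly over
the measures `nu s t`. Every event determined by the first `m` digits has this property. -/
def QI (m : ℕ) (A : Set ℝ) : Prop :=
  MeasurableSet A ∧ ∀ s t : ℝ, 0 < s → 0 ≤ t → t ≤ s → ∀ B : Set ℝ, MeasurableSet B →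
    nu s t (A ∩ gaussMap^[m] ⁻¹' B) ≤ 4 * leb01 B * nu s t A

lemma nu_eq_tsum (s t : ℝ) {A : Set ℝ} (hA : MeasurableSet A) :
    nu s t A = ∑' a : ℕ, nu s t ({x | digit x = a} ∩ A) := by
  rw [← measure_iUnion]
  · congr 1; ext x; simp
  · intro a b hab
    refine Set.disjoint_left.2 ?_
    rintro x ⟨h1, -⟩ ⟨h2, -⟩
    exact hab (h1.symm.trans h2)
  · intro a
    exact (measurable_digit (measurableSet_singleton a)).inter hA

/-- Quasi-independence passes from events for `T x`, chosen according to the first digit of `x`, to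
the resulting event for `x`: decompose over the first digit and apply `nu_branch`. -/
lemma QI.step {m : ℕ} {A : ℕ → Set ℝ} (h : ∀ a, QI m (A a)) :
    QI (m + 1) {x | gaussMap x ∈ A (digit x)} := by
  have hdec : ∀ a : ℕ, {x | digit x = a} ∩ {x | gaussMap x ∈ A (digit x)} =
      {x | digit x = a} ∩ gaussMap ⁻¹' (A a) := by
    intro a; ext x
    simp only [mem_inter_iff, mem_ofPred_eq, mem_preimage]
    constructor <;> rintro ⟨rfl, h⟩ <;> exact ⟨rfl, h⟩
  have hmeas : MeasurableSet {x | gaussMap x ∈ A (digit x)} := by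
    have : {x | gaussMap x ∈ A (digit x)} = ⋃ a, {x | digit x = a} ∩ gaussMap ⁻¹' (A a) := by
      ext x; simp
    rw [this]
    exact MeasurableSet.iUnion fun a =>
      (measurable_digit (measurableSet_singleton a)).inter (measurable_gaussMap (h a).1)
  refine ⟨hmeas, fun s t hs ht hts B hB => ?_⟩
  have hTm := (measurable_gaussMap.iterate m) hB
  rw [nu_eq_tsum s t hmeas,
    nu_eq_tsum s t (hmeas.inter ((measurable_gaussMap.iterate (m + 1)) hB)), ← ENNReal.tsum_mul_left]
  refine ENNReal.tsum_le_tsum fun a => ?_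
  rcases Nat.eq_zero_or_pos a with rfl | ha
  · rw [nu_digit_zero]; exact zero_le
  have ha' : (1 : ℝ) ≤ a := by exact_mod_cast ha
  rw [← inter_assoc, hdec, inter_assoc, Function.iterate_succ, preimage_comp, ← preimage_inter,
    nu_branch ha hs ht ((h a).1.inter hTm), nu_branch ha hs ht (h a).1]
  exact (h a).2 _ _ (by positivity) hs.le (by nlinarith) B hB

lemma QI.empty (m : ℕ) : QI m ∅ := ⟨MeasurableSet.empty, by simp⟩

lemma QI.univ (m : ℕ) : QI m univ := by
  induction m with
  | zero =>
    refine ⟨MeasurableSet.univ, fun s t hs ht hts B hB => ?_⟩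
    simpa using nu_le hs ht hts hB
  | succ m ih => simpa using QI.step (A := fun _ => Set.univ) fun _ => ih

lemma QI.digit (m : ℕ) (p : ℕ → Prop) : QI (m + 1) {x | p (digit x)} := by
  classical
  have := QI.step (m := m) (A := fun a => if p a then Set.univ else ∅) fun a => by
    split_ifs
    exacts [QI.univ m, QI.empty m]
  convert this using 2
  ext x
  split_ifs with h <;> simp [h]

lemma QI.digit_two (m : ℕ) (p : ℕ → ℕ → Prop) :
    QI (m + 2) {x | p (_root_.digit x) (_root_.digit (gaussMap x))} :=
  QI.step (A := fun a => {y | p a (_root_.digit y)}) fun a => QI.digit m (p a)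

/-- Quasi-independence for Lebesgue measure, which is `nu 1 0`. -/
lemma QI.real {m : ℕ} {A B : Set ℝ} (h : QI m A) (hB : MeasurableSet B) :
    leb01.real (A ∩ gaussMap^[m] ⁻¹' B) ≤ 4 * leb01.real A * leb01.real B := by
  have := h.2 1 0 one_pos le_rfl zero_le_one B hB
  rw [nu_one_zero] at this
  have h2 := ENNReal.toReal_mono (by finiteness) this
  rw [ENNReal.toReal_mul, ENNReal.toReal_mul] at h2
  simp only [Measure.real]
  calc _ ≤ _ := h2
    _ = _ := by norm_num; ring

/-- Lebesgue measure is invariant under the Gauss map up to the factor `4`. -/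
lemma real_preimage_le (m : ℕ) {B : Set ℝ} (hB : MeasurableSet B) :
    leb01.real (gaussMap^[m] ⁻¹' B) ≤ 4 * leb01.real B := by
  have := (QI.univ m).real hB
  have h1 : leb01.real Set.univ = 1 := by simp [Measure.real]
  simpa [h1] using this

/-! ### Measure of large products -/

lemma digit_gt_le {r : ℝ} (hr : 0 < r) : leb01.real {x | r < digit x} ≤ 1 / r := by
  have hsub : {x | r < digit x} ∩ Ioo 0 1 ⊆ Ioo 0 (1 / r) := by
    rintro x ⟨h, h0, h1⟩
    have h2 : r < 1 / x := lt_of_lt_of_le h (Nat.floor_le (by positivity))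
    exact ⟨h0, by rwa [lt_one_div h0 hr]⟩
  rw [Measure.real, Measure.restrict_apply' measurableSet_Ioo]
  refine ENNReal.toReal_le_of_le_ofReal (by positivity) ((measure_mono hsub).trans ?_)
  simp

lemma digit_eq_le {a : ℕ} (ha : 1 ≤ a) : leb01.real {x | digit x = a} ≤ 1 / (a : ℝ) ^ 2 := by
  have ha' : (1 : ℝ) ≤ a := by exact_mod_cast ha
  have hsub : {x | digit x = a} ∩ Ioo 0 1 ⊆ Icc (1 / ((a : ℝ) + 1)) (1 / a) := by
    rintro x ⟨h, h0, h1⟩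
    have h2 : 0 ≤ 1 / x := by positivity
    rw [mem_ofPred_eq, digit, Nat.floor_eq_iff h2] at h
    constructor
    · rw [one_div_le (by positivity) h0]; exact h.2.le
    · rw [le_one_div h0 (by positivity)]; exact h.1
  rw [Measure.real, Measure.restrict_apply' measurableSet_Ioo]
  refine ENNReal.toReal_le_of_le_ofReal (by positivity) ((measure_mono hsub).trans ?_)
  rw [Real.volume_Icc]
  refine ENNReal.ofReal_le_ofReal ?_
  rw [div_sub_div _ _ (by positivity) (by positivity), div_le_div_iff₀ (by positivity) (by positivity)]
  nlinarith

/-- The set where the product of the first two digits exceeds `G`. -/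
def bigProd (G : ℝ) : Set ℝ := {x | G < ((digit x * digit (gaussMap x) : ℕ) : ℝ)}

lemma bigProd_QI (m : ℕ) (G : ℝ) : QI (m + 2) (bigProd G) :=
  QI.digit_two m fun a b => G < ((a * b : ℕ) : ℝ)

lemma measurable_bigProd (G : ℝ) : MeasurableSet (bigProd G) := (bigProd_QI 0 G).1

lemma measurable_digit_gt (r : ℝ) : MeasurableSet {x | r < digit x} :=
  (QI.digit 0 fun a => r < a).1

lemma digit_pair_le {G : ℝ} (hG : 0 < G) {a : ℕ} (ha : 1 ≤ a) :
    leb01.real ({x | digit x = a} ∩ gaussMap ⁻¹' {x | G / a < digit x}) ≤ 4 / G * (a : ℝ)⁻¹ := by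
  have ha' : (1 : ℝ) ≤ a := by exact_mod_cast ha
  calc _ ≤ 4 * leb01.real {x | digit x = a} * leb01.real {x | G / a < digit x} :=
        (QI.digit 0 fun b => b = a).real (measurable_digit_gt _)
    _ ≤ 4 * (1 / (a : ℝ) ^ 2) * (1 / (G / a)) := by
        gcongr
        · exact digit_eq_le ha
        · exact digit_gt_le (by positivity)
    _ = _ := by field_simp

/-- Either `a₁ > G`, or `a₁ = a ≤ G` and `a₂ > G / a`; the latter events contribute a harmonic sum,
whence the logarithm. -/
lemma bigProd_le {G : ℝ} (hG : 1 ≤ G) :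
    leb01.real (bigProd G) ≤ (5 + 4 * Real.log G) / G := by
  have hG0 : 0 < G := by linarith
  set F : ℕ → Set ℝ := fun a => {x | digit x = a} ∩ gaussMap ⁻¹' {x | G / a < digit x} with hF
  have hsub : bigProd G ⊆ {x | G < digit x} ∪ ⋃ a ∈ Finset.Icc 1 ⌊G⌋₊, F a := by
    intro x hx
    by_cases h : G < digit x
    · exact Or.inl h
    right
    have h1 : 1 ≤ digit x := by
      by_contra h0
      have : digit x = 0 := by omega
      simp only [bigProd, mem_ofPred_eq, this] at hx
      norm_num at hx; linarith
    have h1' : (0 : ℝ) < digit x := by exact_mod_cast h1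
    simp only [mem_iUnion]
    refine ⟨digit x, Finset.mem_Icc.2 ⟨h1, Nat.le_floor (not_lt.1 h)⟩, rfl, ?_⟩
    simp only [bigProd, mem_ofPred_eq, Nat.cast_mul] at hx
    simp only [mem_preimage, mem_ofPred_eq]
    rw [div_lt_iff₀ h1']; linarith
  have hsum : ∑ a ∈ Finset.Icc 1 ⌊G⌋₊, leb01.real (F a) ≤ 4 / G * (1 + Real.log G) := by
    calc _ ≤ ∑ a ∈ Finset.Icc 1 ⌊G⌋₊, 4 / G * (a : ℝ)⁻¹ :=
          Finset.sum_le_sum fun a ha => digit_pair_le hG0 (Finset.mem_Icc.1 ha).1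
      _ = 4 / G * (harmonic ⌊G⌋₊ : ℝ) := by
          rw [← Finset.mul_sum, harmonic_eq_sum_Icc]; push_cast; rfl
      _ ≤ 4 / G * (1 + Real.log ⌊G⌋₊) := by gcongr; exact harmonic_le_one_add_log _
      _ ≤ _ := by
          have : (0 : ℝ) < ⌊G⌋₊ := by exact_mod_cast Nat.floor_pos.2 hG
          gcongr
          exact Nat.floor_le hG0.le
  calc leb01.real (bigProd G) ≤ _ := measureReal_mono hsub
    _ ≤ _ := measureReal_union_le _ _
    _ ≤ 1 / G + 4 / G * (1 + Real.log G) := by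
        gcongr
        · exact digit_gt_le hG0
        · exact (measureReal_biUnion_finset_le _ _).trans hsum
    _ = _ := by field_simp; ring

/-- Either `a₂ > G`, or `a₂ = a ≤ G` and both `a₁` and `a₃` exceed `G / a`. Each of the at most `G`
events of the second kind has measure at most `16 / G ^ 2`, so there is no logarithm. -/
lemma bigProd_inter_le {G : ℝ} (hG : 1 ≤ G) :
    leb01.real (bigProd G ∩ gaussMap ⁻¹' bigProd G) ≤ 20 / G := by
  have hG0 : 0 < G := by linarith
  set D : ℕ → Set ℝ := fun a => {x | digit x = a} ∩ gaussMap ⁻¹' {x | G / a < digit x} with hD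
  set F : ℕ → Set ℝ := fun a => {x | G / a < digit x} ∩ gaussMap^[1] ⁻¹' D a with hF
  have hsub : bigProd G ∩ gaussMap ⁻¹' bigProd G ⊆
      gaussMap^[1] ⁻¹' {x | G < digit x} ∪ ⋃ a ∈ Finset.Icc 1 ⌊G⌋₊, F a := by
    rintro x ⟨hx, hy⟩
    by_cases h : G < digit (gaussMap x)
    · exact Or.inl h
    right
    have h1 : 1 ≤ digit (gaussMap x) := by
      by_contra h0
      have : digit (gaussMap x) = 0 := by omega
      simp only [bigProd, mem_ofPred_eq, this] at hx
      norm_num at hx; linarith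
    have h1' : (0 : ℝ) < digit (gaussMap x) := by exact_mod_cast h1
    simp only [mem_iUnion]
    simp only [bigProd, mem_preimage, mem_ofPred_eq, Nat.cast_mul] at hx hy
    refine ⟨digit (gaussMap x), Finset.mem_Icc.2 ⟨h1, Nat.le_floor (not_lt.1 h)⟩, ?_, rfl, ?_⟩
    · simp only [mem_ofPred_eq]
      rw [div_lt_iff₀ h1']; linarith
    · simp only [mem_preimage, mem_ofPred_eq, Function.iterate_one]
      rw [div_lt_iff₀ h1']; linarith
  have hterm : ∀ a ∈ Finset.Icc 1 ⌊G⌋₊, leb01.real (F a) ≤ 16 / G ^ 2 := by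
    intro a ha
    have ha1 : 1 ≤ a := (Finset.mem_Icc.1 ha).1
    have ha' : (1 : ℝ) ≤ a := by exact_mod_cast ha1
    have hDm : MeasurableSet (D a) :=
      (QI.digit 0 fun b => b = a).1.inter (measurable_gaussMap (measurable_digit_gt _))
    calc _ ≤ 4 * leb01.real {x | G / a < digit x} * leb01.real (D a) :=
          (QI.digit 0 fun b => G / a < b).real hDm
      _ ≤ 4 * (1 / (G / a)) * (4 / G * (a : ℝ)⁻¹) := by
          gcongr
          · exact digit_gt_le (by positivity)
          · exact digit_pair_le hG0 ha1
      _ = _ := by field_simp; norm_num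
  have hsum : ∑ a ∈ Finset.Icc 1 ⌊G⌋₊, leb01.real (F a) ≤ 16 / G := by
    calc _ ≤ ∑ a ∈ Finset.Icc 1 ⌊G⌋₊, 16 / G ^ 2 := Finset.sum_le_sum hterm
      _ = ⌊G⌋₊ * (16 / G ^ 2) := by simp
      _ ≤ G * (16 / G ^ 2) := by gcongr; exact Nat.floor_le hG0.le
      _ = _ := by field_simp
  calc _ ≤ _ := measureReal_mono hsub
    _ ≤ _ := measureReal_union_le _ _
    _ ≤ 4 * (1 / G) + 16 / G := by
        gcongr
        · exact (real_preimage_le 1 (measurable_digit_gt _)).trans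
            (by gcongr; exact digit_gt_le hG0)
        · exact (measureReal_biUnion_finset_le _ _).trans hsum
    _ = _ := by ring

/-! ### The exceptional sets and Borel–Cantelli -/

/-- Two distinct indices below `N` carry a product exceeding `G`. Indices count applications of the
Gauss map, so index `i` refers to the product `a_{i+1} a_{i+2}`. -/
def bad (N : ℕ) (G : ℝ) : Set ℝ :=
  {x | ∃ i j : ℕ, i < j ∧ j < N ∧ gaussMap^[i] x ∈ bigProd G ∧ gaussMap^[j] x ∈ bigProd G}

/-- Adjacent pairs of indices give the first term, pairs at distance at least two the second one. -/
lemma bad_le (N : ℕ) {G : ℝ} (hG : 1 ≤ G) :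
    leb01.real (bad N G) ≤ 80 * (N / G) + 16 * (N * ((5 + 4 * Real.log G) / G)) ^ 2 := by
  have hG0 : 0 < G := by linarith
  set E := bigProd G with hE
  set q := (5 + 4 * Real.log G) / G with hq
  have hq0 : leb01.real E ≤ q := bigProd_le hG
  have hqn : 0 ≤ q := measureReal_nonneg.trans hq0
  set A : ℕ → Set ℝ := fun i => gaussMap^[i] ⁻¹' (E ∩ gaussMap ⁻¹' E) with hA
  set B : ℕ × ℕ → Set ℝ := fun p => gaussMap^[p.1] ⁻¹' (E ∩ gaussMap^[p.2 + 2] ⁻¹' E) with hB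
  have hEm : MeasurableSet E := measurable_bigProd G
  have hsub : bad N G ⊆ (⋃ i ∈ Finset.range N, A i) ∪
      ⋃ p ∈ Finset.range N ×ˢ Finset.range N, B p := by
    rintro x ⟨i, j, hij, hj, hi1, hj1⟩
    -- `A i` covers `j = i + 1`; `B (i, d)` covers `j = i + d + 2`.
    rcases Nat.eq_or_lt_of_le hij with h | h
    · left
      simp only [mem_iUnion]
      refine ⟨i, Finset.mem_range.2 (by omega), hi1, ?_⟩
      rw [mem_preimage, ← Function.iterate_succ_apply' gaussMap, h]; exact hj1
    · right
      simp only [mem_iUnion]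
      refine ⟨(i, j - i - 2), Finset.mem_product.2
        ⟨Finset.mem_range.2 (by simp only; omega), Finset.mem_range.2 (by simp only; omega)⟩, hi1, ?_⟩
      simp only [mem_preimage]
      rw [← Function.iterate_add_apply, show j - i - 2 + 2 + i = j by omega]
      exact hj1
  have h1 : ∀ i ∈ Finset.range N, leb01.real (A i) ≤ 80 / G := fun i _ => by
    calc _ ≤ 4 * leb01.real (E ∩ gaussMap ⁻¹' E) :=
          real_preimage_le i (hEm.inter (measurable_gaussMap hEm))
      _ ≤ 4 * (20 / G) := by gcongr; exact bigProd_inter_le hG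
      _ = _ := by ring
  have h2 : ∀ p ∈ Finset.range N ×ˢ Finset.range N, leb01.real (B p) ≤ 16 * q ^ 2 := fun p _ => by
    calc _ ≤ 4 * leb01.real (E ∩ gaussMap^[p.2 + 2] ⁻¹' E) :=
          real_preimage_le p.1 (hEm.inter ((measurable_gaussMap.iterate _) hEm))
      _ ≤ 4 * (4 * leb01.real E * leb01.real E) := by gcongr; exact (bigProd_QI p.2 G).real hEm
      _ ≤ 4 * (4 * q * q) := by gcongr
      _ = _ := by ring
  calc _ ≤ _ := measureReal_mono hsub
    _ ≤ _ := measureReal_union_le _ _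
    _ ≤ ∑ i ∈ Finset.range N, 80 / G + ∑ p ∈ Finset.range N ×ˢ Finset.range N, 16 * q ^ 2 := by
        gcongr
        · exact (measureReal_biUnion_finset_le _ _).trans (Finset.sum_le_sum h1)
        · exact (measureReal_biUnion_finset_le _ _).trans (Finset.sum_le_sum h2)
    _ = _ := by simp; ring

/-- The threshold `g(2 ^ k)`, with `g(n) = n (log n) ^ c`. -/
noncomputable def level (c : ℝ) (k : ℕ) : ℝ := 2 ^ k * Real.log (2 ^ k) ^ c

lemma bad_level_le {c : ℝ} (hc : 3 / 2 < c) {k : ℕ} (hk : 2 ≤ k) :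
    leb01.real (bad (2 ^ (k + 1)) (level c k)) ≤
      160 * (k * Real.log 2) ^ (-c) +
        64 * (9 + 4 * c) ^ 2 * (k * Real.log 2) ^ (2 - 2 * c) := by
  set L := (k : ℝ) * Real.log 2 with hL
  have hk' : (2 : ℝ) ≤ k := by exact_mod_cast hk
  -- This is where `2 ≤ k` is needed: it makes the base of all powers at least `1`.
  have hL1 : 1 ≤ L := by nlinarith [Real.log_two_gt_d9]
  have hL0 : 0 < L := by linarith
  have hlev : level c k = 2 ^ k * L ^ c := by rw [level, Real.log_pow]
  have hLc : 1 ≤ L ^ c := Real.one_le_rpow hL1 (by linarith)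
  have h2k : (1 : ℝ) ≤ 2 ^ k := one_le_pow₀ (by norm_num)
  have hG : 1 ≤ level c k := by rw [hlev]; nlinarith
  have hlog : Real.log (level c k) ≤ (1 + c) * L := by
    rw [hlev, Real.log_mul (by positivity) (by positivity), Real.log_pow, Real.log_rpow hL0]
    nlinarith [Real.log_le_sub_one_of_pos hL0]
  have hNG : ((2 ^ (k + 1) : ℕ) : ℝ) / level c k = 2 * L ^ (-c) := by
    rw [hlev, Real.rpow_neg hL0.le]; push_cast; field_simp; ring
  have hlog0 : 0 ≤ Real.log (level c k) := Real.log_nonneg hG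
  calc _ ≤ _ := bad_le _ hG
    _ = 80 * (2 * L ^ (-c)) + 16 * ((2 * L ^ (-c)) * (5 + 4 * Real.log (level c k))) ^ 2 := by
        rw [← hNG]; ring
    _ ≤ 80 * (2 * L ^ (-c)) + 16 * ((2 * L ^ (-c)) * ((9 + 4 * c) * L)) ^ 2 := by
        gcongr
        nlinarith
    _ = _ := by
        have : L ^ (2 - 2 * c) = (L ^ (-c)) ^ 2 * L ^ 2 := by
          rw [← Real.rpow_mul_natCast hL0.le, ← Real.rpow_natCast L 2, ← Real.rpow_add hL0]
          congr 1; push_cast; ring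
        rw [this]; ring

/-- The blocks are shifted by `2`, since `bad_level_le` needs `2 ≤ k`. -/
lemma summable_bound {c : ℝ} (hc : 3 / 2 < c) : Summable fun k : ℕ =>
    160 * (((k + 2 : ℕ) : ℝ) * Real.log 2) ^ (-c) +
      64 * (9 + 4 * c) ^ 2 * (((k + 2 : ℕ) : ℝ) * Real.log 2) ^ (2 - 2 * c) := by
  have key : ∀ p : ℝ, p < -1 → Summable fun k : ℕ => (((k + 2 : ℕ) : ℝ) * Real.log 2) ^ p := by
    intro p hp
    have h := ((summable_nat_add_iff 2).2 (Real.summable_nat_rpow.2 hp)).mul_right (Real.log 2 ^ p)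
    refine h.congr fun k => ?_
    rw [Real.mul_rpow (by positivity) (Real.log_nonneg (by norm_num))]
  exact ((key _ (by linarith)).mul_left _).add ((key _ (by linarith)).mul_left _)

theorem at_most_one_large_product (c : ℝ) (hc : 3 / 2 < c) :
    ∀ᵐ x ∂(volume.restrict (Set.Ioo (0:ℝ) 1)),
      ∃ n₀ : ℕ, 0 < n₀ ∧ ∀ n : ℕ, n₀ ≤ n →
        ((Finset.Icc 1 n).filter
          (fun i => (n : ℝ) * Real.log n ^ c < ((pq i x * pq (i + 1) x : ℕ) : ℝ))).card ≤ 1 := by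
  have hfin : ∑' k : ℕ, leb01 (bad (2 ^ (k + 2 + 1)) (level c (k + 2))) ≠ ⊤ := by
    refine ne_top_of_le_ne_top (summable_bound hc).tsum_ofReal_ne_top ?_
    refine ENNReal.tsum_le_tsum fun k => ?_
    rw [← ofReal_measureReal]
    exact ENNReal.ofReal_le_ofReal (bad_level_le hc (by omega))
  filter_upwards [ae_eventually_notMem hfin] with x hx
  obtain ⟨K, hK⟩ := eventually_atTop.1 hx
  refine ⟨2 ^ (K + 2), by positivity, fun n hn => ?_⟩
  by_contra! hcard
  have hn0 : n ≠ 0 := by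
    have : 0 < 2 ^ (K + 2) := by positivity
    omega
  have hKk : K + 2 ≤ Nat.log 2 n := Nat.le_log_of_pow_le (by norm_num) hn
  obtain ⟨k, hk⟩ : ∃ k, Nat.log 2 n = k + 2 := ⟨Nat.log 2 n - 2, by omega⟩
  have hlow : 2 ^ (k + 2) ≤ n := hk ▸ Nat.pow_log_le_self 2 hn0
  have hupp : n < 2 ^ (k + 2 + 1) := hk ▸ Nat.lt_pow_succ_log_self (by norm_num) n
  have hlow' : (2 : ℝ) ^ (k + 2) ≤ n := by exact_mod_cast hlow
  have h2k : (1 : ℝ) ≤ 2 ^ (k + 2) := one_le_pow₀ (by norm_num)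
  have hlevel : level c (k + 2) ≤ n * Real.log n ^ c := by
    have := Real.log_nonneg h2k
    unfold level
    gcongr
  have hmem : ∀ i, i ∈ (Finset.Icc 1 n).filter
      (fun i => (n : ℝ) * Real.log n ^ c < ((pq i x * pq (i + 1) x : ℕ) : ℝ)) →
      1 ≤ i ∧ i ≤ n ∧ gaussMap^[i - 1] x ∈ bigProd (level c (k + 2)) := by
    intro i hi
    obtain ⟨hi1, hi2⟩ := Finset.mem_filter.1 hi
    obtain ⟨h1, h2⟩ := Finset.mem_Icc.1 hi1
    refine ⟨h1, h2, ?_⟩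
    obtain ⟨i, rfl⟩ : ∃ j, i = j + 1 := ⟨i - 1, by omega⟩
    rw [pq_succ, pq_succ, Function.iterate_succ_apply'] at hi2
    exact lt_of_le_of_lt hlevel hi2
  obtain ⟨i, hi, j, hj, hij⟩ := Finset.one_lt_card.1 hcard
  have hi' := hmem i hi
  have hj' := hmem j hj
  refine hK k (by omega) ?_
  rcases lt_or_gt_of_ne hij with h | h
  · exact ⟨i - 1, j - 1, by omega, by omega, hi'.2.2, hj'.2.2⟩
  · exact ⟨j - 1, i - 1, by omega, by omega, hj'.2.2, hi'.2.2⟩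
end
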